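/- Assume Conditions (C). There exists a constant A > 0 such that if the quadruple of sequences (m, l, 0, y) verifies Conditions (C3), then P( sup_{l ≤ u ≤ w ≤ m} | L⁰_w − L⁰_u − E[L⁰_w − L⁰_u] | ≥ y ) ≤ A·exp(−y²/(A(y·n^{1/3} + m − l))). -/

import Mathlib

open MeasureTheory Filter Asymptotics
open scoped Classical ENNReal Topology

noncomputable section

/-- `ℓ_n`: the total weight. -/
def ell (w : ∀ n : ℕ, Fin n → ℝ) (n : ℕ) : ℝ := ∑ i, w n i

/-- Conditions (C) on the triangular array of weights, relative to the law `μ` of the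
limiting random variable `W`. -/
structure CondC (w : ∀ n : ℕ, Fin n → ℝ) (μ : Measure ℝ) : Prop where
  isProb : IsProbabilityMeasure μ
  pos : ∀ᵐ x ∂μ, 0 < x
  w_pos : ∀ n, ∀ i : Fin n, 0 < w n i
  w_anti : ∀ n, ∀ i j : Fin n, i ≤ j → w n j ≤ w n i
  int3 : Integrable (fun x => x ^ 3) μ
  moment_eq : ∫ x, x ^ 2 ∂μ = ∫ x, x ∂μ
  weak : ∀ g : BoundedContinuousFunction ℝ ℝ,
    Tendsto (fun n : ℕ => (∑ i : Fin n, g (w n i)) / (n : ℝ)) atTop (𝓝 (∫ x, g x ∂μ))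
  ell_asymp : (fun n : ℕ => ell w n - (∫ x, x ∂μ) * (n : ℝ)) =o[atTop]
      fun n : ℕ => (n : ℝ) ^ ((2 : ℝ) / 3)
  sq_asymp : (fun n : ℕ => (∑ i : Fin n, (w n i) ^ 2) - (∫ x, x ^ 2 ∂μ) * (n : ℝ)) =o[atTop]
      fun n : ℕ => (n : ℝ) ^ ((2 : ℝ) / 3)
  cube_asymp : (fun n : ℕ => (∑ i : Fin n, (w n i) ^ 3) - (∫ x, x ^ 3 ∂μ) * (n : ℝ)) =o[atTop]
      fun _ : ℕ => (1 : ℝ)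
  max_asymp : (fun n : ℕ => ⨆ i : Fin n, w n i) =o[atTop] fun n : ℕ => (n : ℝ) ^ ((1 : ℝ) / 3)

/-- The constant `C = E[W³]/E[W]`. -/
def Cconst (μ : Measure ℝ) : ℝ := (∫ x, x ^ 3 ∂μ) / (∫ x, x ∂μ)

/-- The critical percolation parameter `p_f = (ℓ_n^{1/3} + f_n)/ℓ_n^{4/3}`. -/
def pf (w : ∀ n : ℕ, Fin n → ℝ) (f : ℕ → ℝ) (n : ℕ) : ℝ :=
  (ell w n ^ ((1 : ℝ) / 3) + f n) / ell w n ^ ((4 : ℝ) / 3)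

/-- A Bernoulli-type measure on `Bool` with parameter `p`. -/
def bern (p : ℝ) : Measure Bool :=
  ENNReal.ofReal (1 - p) • Measure.dirac false + ENNReal.ofReal p • Measure.dirac true

/-- The law of the independent edge indicators of the rank-1 inhomogeneous random graph
`G(W,p)`: the indicator attached to the (ordered) pair `(i,j)` is Bernoulli with success
probability `1 - exp (- w i * w j * p)`, all independent. -/
def graphMeasure (n : ℕ) (wn : Fin n → ℝ) (p : ℝ) : Measure (Fin n → Fin n → Bool) :=
  Measure.pi fun i => Measure.pi fun j => bern (1 - Real.exp (-(wn i * wn j * p)))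

/-- The simple graph built from a sample of edge indicators: `i ~ j` iff `i ≠ j` and the
indicator of the pair `(min i j, max i j)` is `true`. -/
def graphOf {n : ℕ} (ω : Fin n → Fin n → Bool) : SimpleGraph (Fin n) :=
  SimpleGraph.fromRel fun i j => ω (min i j) (max i j) = true

/-- The size (number of vertices) of a connected component. -/
def csize {n : ℕ} (G : SimpleGraph (Fin n)) (c : G.ConnectedComponent) : ℕ :=
  Nat.card {v : Fin n // G.connectedComponentMk v = c}

/-- The weight of a connected component: sum of the weights of its vertices. -/
def cweight {n : ℕ} (wn : Fin n → ℝ) (G : SimpleGraph (Fin n)) (c : G.ConnectedComponent) : ℝ :=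
  ∑ v : Fin n, if G.connectedComponentMk v = c then wn v else 0

/-- The number of edges of a connected component. -/
def cedges {n : ℕ} (G : SimpleGraph (Fin n)) (c : G.ConnectedComponent) : ℕ :=
  Nat.card {e : Sym2 (Fin n) // e ∈ G.edgeSet ∧ ∀ v ∈ e, G.connectedComponentMk v = c}

/-- The surplus (excess) of a connected component: edges − vertices + 1. -/
def csurplus {n : ℕ} (G : SimpleGraph (Fin n)) (c : G.ConnectedComponent) : ℤ :=
  (cedges G c : ℤ) - (csize G c : ℤ) + 1

/-- `c` is a largest connected component. -/
def isLargest {n : ℕ} (G : SimpleGraph (Fin n)) (c : G.ConnectedComponent) : Prop :=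
  ∀ c', csize G c' ≤ csize G c

/-- The finset of connected components of a graph on `Fin n`. -/
def comps {n : ℕ} (G : SimpleGraph (Fin n)) : Finset G.ConnectedComponent :=
  Finset.univ.image G.connectedComponentMk

/-- The law of the size-biased random order without replacement `(v(1),…,v(n))`, seen as a
measure on functions `Fin n → Fin n` (supported on permutations `σ`, with
`P(v = σ) = ∏_i w (σ i) / (ℓ_n − ∑_{k<i} w (σ k))`). -/
def sbMeasure (n : ℕ) (wn : Fin n → ℝ) : Measure (Fin n → Fin n) :=
  Measure.sum fun σ : Equiv.Perm (Fin n) =>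
    ENNReal.ofReal (∏ i : Fin n,
        wn (σ i) / ((∑ k, wn k) - ∑ k ∈ Finset.univ.filter fun k => k < i, wn (σ k))) •
      Measure.dirac ⇑σ

/-- The joint law of (edge indicators of `G(W,p)`, size-biased order), the two being
independent. -/
def expMeasure' (n : ℕ) (wn : Fin n → ℝ) (p : ℝ) :
    Measure ((Fin n → Fin n → Bool) × (Fin n → Fin n)) :=
  Measure.sum fun σ : Equiv.Perm (Fin n) =>
    ENNReal.ofReal (∏ i : Fin n,
        wn (σ i) / ((∑ k, wn k) - ∑ k ∈ Finset.univ.filter fun k => k < i, wn (σ k))) •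
      (graphMeasure n wn p).map fun g => (g, ⇑σ)

/-- `sbW wn vord k` is `w_{v(k)}` (1-based), with the conventions `w_{v(0)} = 0` and
`w_{v(k)} = 0` for `k > n`. -/
def sbW {n : ℕ} (wn : Fin n → ℝ) (vord : Fin n → Fin n) (k : ℕ) : ℝ :=
  if h : k - 1 < n then (if k = 0 then 0 else wn (vord ⟨k - 1, h⟩)) else 0

/-- The (0-based) first position, in the order `vord`, of a vertex of the component `c`;
this governs the order in which components are discovered by the breadth-first walk. -/
def firstIdx {n : ℕ} (G : SimpleGraph (Fin n)) (vord : Fin n → Fin n)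
    (c : G.ConnectedComponent) : ℕ :=
  sInf {i : ℕ | ∃ h : i < n, G.connectedComponentMk (vord ⟨i, h⟩) = c}

/-- The number of vertices explored strictly before the exploration of the component `c`
starts: components are explored in the order of their first appearance in `vord`, and the
exploration of `c` occupies the steps `startT c + 1, …, startT c + csize c`. -/
def startT {n : ℕ} (G : SimpleGraph (Fin n)) (vord : Fin n → Fin n)
    (c : G.ConnectedComponent) : ℕ :=
  ∑ v : Fin n, if firstIdx G vord (G.connectedComponentMk v) < firstIdx G vord c then 1 else 0

/-- The state (explored vertices, queue of discovered-but-unexplored vertices) of the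
breadth-first walk after `i` steps; roots are chosen as the first undiscovered vertex in the
order `vord`, and children are queued in the order `vord`. -/
def bfwQueue {n : ℕ} (G : SimpleGraph (Fin n)) (vord : Fin n → Fin n) :
    ℕ → Finset (Fin n) × List (Fin n)
  | 0 => (∅, [])
  | i + 1 =>
    let s := bfwQueue G vord i
    let q : List (Fin n) :=
      if s.2.isEmpty then ((List.ofFn vord).filter fun v => decide (v ∉ s.1)).take 1 else s.2
    match q with
    | [] => (s.1, [])
    | v :: rest =>
      (insert v s.1,
        rest ++ (List.ofFn vord).filter fun u => decide (G.Adj v u ∧ u ∉ s.1 ∧ u ∉ q))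

/-- The reflected exploration process `L` of the breadth-first walk:
`L_0 = 1`, `L_{i+1} = max (L_i + c(i+1) - 1) 1`. -/
def Lproc {n : ℕ} (G : SimpleGraph (Fin n)) (vord : Fin n → Fin n) (i : ℕ) : ℕ :=
  max (bfwQueue G vord i).2.length 1

/-- `discNbrs G vord i` is the number of neighbours of `v(i+1)` (0-based: `vord i`) outside
`{v(1),…,v(i+1)}`, i.e. the increment `X⁰_{i+1} + 1` of the process `L⁰`. -/
def discNbrs {n : ℕ} (G : SimpleGraph (Fin n)) (vord : Fin n → Fin n) (i : ℕ) : ℕ :=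
  Nat.card {j : Fin n // (∃ h : i < n, G.Adj (vord ⟨i, h⟩) j) ∧
    ∀ k : ℕ, ∀ hk : k < n, k ≤ i → vord ⟨k, hk⟩ ≠ j}

/-- The process `L⁰`: `L⁰_0 = 1`, `L⁰_{i+1} = L⁰_i + X⁰_{i+1}` where
`X⁰_{i+1} = ∑_{j ∉ {v(1),…,v(i+1)}} Y(v(i+1), j) − 1`. -/
def L0 {n : ℕ} (G : SimpleGraph (Fin n)) (vord : Fin n → Fin n) (m : ℕ) : ℤ :=
  1 - (m : ℤ) + ∑ i ∈ Finset.range m, (discNbrs G vord i : ℤ)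

/-- The deterministic-drift process `L̃^h`, defined by
`L̃^h_m + m − 1 = ∑_{i=1}^m ∑_{k > i+h} (1 − exp (−w_{v(i)} w_{v(k)} p))`,
the inner sum being over positions `k ≤ n` in the size-biased order. -/
def Ltilde {n : ℕ} (wn : Fin n → ℝ) (p : ℝ) (vord : Fin n → Fin n) (h m : ℕ) : ℝ :=
  1 - (m : ℝ) + ∑ i ∈ Finset.range m,
    if hi : i < n then
      ∑ k : Fin n, if i + h < (k : ℕ) then
        1 - Real.exp (-(wn (vord ⟨i, hi⟩) * wn (vord k) * p)) else 0
    else 0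

/-- The law of the independent exponential clocks `(T_k)_{k ≤ n}`, `T_k` of rate `w_k / ℓ_n`. -/
def clocksMeasure (n : ℕ) (wn : Fin n → ℝ) : Measure (Fin n → ℝ) :=
  Measure.pi fun k => ProbabilityTheory.expMeasure (wn k / ∑ i, wn i)

/-- `N(x)`: the number of clocks that have rung by time `x`. -/
def Nclock {n : ℕ} (x : ℝ) (ω : Fin n → ℝ) : ℕ :=
  ∑ k : Fin n, if ω k ≤ x then 1 else 0

/-- `X(x)`: the total weight of the clocks that have rung by time `x`. -/
def Xclock {n : ℕ} (wn : Fin n → ℝ) (x : ℝ) (ω : Fin n → ℝ) : ℝ :=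
  ∑ k : Fin n, if ω k ≤ x then wn k else 0

/-- Conditions (C2) on a pair of sequences `(a, b)`, relative to the constant `Ā`. -/
structure Cond2 (w : ∀ n : ℕ, Fin n → ℝ) (Abar : ℝ) (a b : ℕ → ℝ) : Prop where
  exp_lt : ∀ᶠ n : ℕ in atTop,
    Real.exp (-(b n) ^ 2 / (Abar * (b n * (n : ℝ) ^ ((1 : ℝ) / 3) + a n))) < 1 / 4
  a_top : Tendsto a atTop atTop
  b_top : Tendsto b atTop atTop
  a_lito : a =o[atTop] fun n : ℕ => (n : ℝ)
  b_bigO : b =O[atTop] a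
  a_bigO : a =O[atTop] fun n => b n * ell w n ^ ((1 : ℝ) / 3)
  a_sq_bigO : (fun n => a n ^ 2) =O[atTop] fun n => b n * ell w n

/-- Conditions (C3) on a quadruple of sequences `(a, b, c, d)`. -/
structure Cond3 (w : ∀ n : ℕ, Fin n → ℝ) (Abar : ℝ) (a b c d : ℕ → ℝ) : Prop where
  sum_lito : (fun n => a n + c n) =o[atTop] fun n : ℕ => (n : ℝ)
  diff_top : Tendsto (fun n => a n - b n) atTop atTop
  d_bigO : d =O[atTop] fun n => a n - b n
  c2 : Cond2 w Abar (fun n => Real.sqrt ((a n - b n) * (a n + c n))) d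

/-- The list of component sizes, sorted in decreasing order. -/
def sizesList {n : ℕ} (G : SimpleGraph (Fin n)) : List ℕ :=
  (((comps G).val.map fun c => csize G c).sort (· ≤ ·)).reverse

/-- `kthSize G k` is the size of the `(k+1)`-st largest connected component of `G`
(`0` if there is no such component). -/
def kthSize {n : ℕ} (G : SimpleGraph (Fin n)) (k : ℕ) : ℕ := (sizesList G).getD k 0

end

/-!
Given the explored vertices and the edges they have uncovered, the children of the next vertex are
counted by a sum of independent edge indicators, whose mean depends on the past essentially only
through the sum of the squared weights of the explored vertices. Hence an increment of `L⁰` is,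
up to a deterministic term, the sum of a martingale and of an accumulated compensator, and the
compensator is governed by the explored sum of squares. Truncating the weights, this sum is again a
martingale plus a compensator whose deterministic approximation cancels against the expectation.
Both martingales have exponential moments controlled through `∑ wᵢ³`, so a maximal inequality
bounds their suprema; the large weights carry a small share of the cubes, which makes the
remaining errors smaller than `y`.
-/

section MaximalInequality

variable {Ω : Type*} {m0 : MeasurableSpace Ω} {P : Measure Ω} {ℱ : Filtration ℕ m0}

theorem mul_measureReal_inter_add_setIntegral_diff_le [IsFiniteMeasure P] {Y : Ω → ℝ} {S : Set Ω}
    {ε : ℝ} (hY : Measurable Y) (hint : Integrable Y P) (hS : MeasurableSet S) :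
    ε * P.real (S ∩ {ω | ε ≤ Y ω}) + ∫ ω in S \ {ω | ε ≤ Y ω}, Y ω ∂P ≤ ∫ ω in S, Y ω ∂P := by
  have hB : MeasurableSet {ω | ε ≤ Y ω} := measurableSet_le measurable_const hY
  rw [← integral_inter_add_sdiff (s := S) hB hint.integrableOn]
  exact add_le_add_left (setIntegral_ge_of_const_le_real (hS.inter hB) (measure_ne_top _ _)
    (fun ω hω => hω.2) hint.integrableOn) _

/-- The hitting event is `ℱ k`-measurable at time `k`, so on its complement the process may take
one more step without increasing its mean. -/
theorem mul_measureReal_add_setIntegral_compl_le [IsFiniteMeasure P] {Y : ℕ → Ω → ℝ} {l m : ℕ}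
    {ε : ℝ} (hadapted : ∀ k, Measurable[ℱ k] (Y k)) (hint : ∀ k, Integrable (Y k) P)
    (hstep : ∀ k, l ≤ k → k < m → P[Y (k + 1) | ℱ k] ≤ᵐ[P] Y k) (hlm : l ≤ m) :
    ε * P.real {ω | ∃ k ∈ Finset.Icc l m, ε ≤ Y k ω} +
      ∫ ω in {ω | ∃ k ∈ Finset.Icc l m, ε ≤ Y k ω}ᶜ, Y m ω ∂P ≤ ∫ ω, Y l ω ∂P := by
  induction m, hlm using Nat.le_induction with
  | base =>
    simpa [Set.compl_eq_univ_sdiff] using mul_measureReal_inter_add_setIntegral_diff_le (ε := ε)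
      ((hadapted l).mono (ℱ.le l) le_rfl) (hint l) MeasurableSet.univ
  | succ m hlm ih =>
    set hit : ℕ → Set Ω := fun m => {ω | ∃ k ∈ Finset.Icc l m, ε ≤ Y k ω} with hit_def
    have hit_succ : hit (m + 1) = hit m ∪ {ω | ε ≤ Y (m + 1) ω} := by
      ext ω
      simp only [hit_def, Finset.mem_Icc, Set.mem_ofPred_eq, Set.mem_union, Nat.le_add_one_iff]
      grind
    have hit_meas : MeasurableSet[ℱ m] (hit m) := by
      have : hit m = ⋃ k ∈ Finset.Icc l m, {ω | ε ≤ Y k ω} := by ext; simp [hit_def]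
      rw [this]
      exact Finset.measurableSet_biUnion _ fun k hk =>
        (hadapted k).mono (ℱ.mono (Finset.mem_Icc.1 hk).2) le_rfl measurableSet_Ici
    have hit_meas0 : MeasurableSet (hit m) := ℱ.le m _ hit_meas
    have next_le : ∫ ω in (hit m)ᶜ, Y (m + 1) ω ∂P ≤ ∫ ω in (hit m)ᶜ, Y m ω ∂P := by
      rw [← setIntegral_condExp (ℱ.le m) (hint _) hit_meas.compl]
      exact setIntegral_mono_ae integrable_condExp.integrableOn (hint m).integrableOn
        (hstep m hlm m.lt_succ_self)
    have split := mul_measureReal_inter_add_setIntegral_diff_le (ε := ε)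
      ((hadapted (m + 1)).mono (ℱ.le _) le_rfl) (hint (m + 1)) hit_meas0.compl
    have measure_split : P.real (hit (m + 1)) =
        P.real (hit m) + P.real ((hit m)ᶜ ∩ {ω | ε ≤ Y (m + 1) ω}) := by
      rw [← measureReal_union (Set.disjoint_left.2 fun ω h h' => h'.1 h)
        (hit_meas0.compl.inter (measurableSet_le measurable_const
          ((hadapted (m + 1)).mono (ℱ.le _) le_rfl))), hit_succ]
      congr 1
      ext; simp only [Set.mem_union, Set.mem_inter_iff, Set.mem_compl_iff]; tauto
    have compl_eq : (hit (m + 1))ᶜ = (hit m)ᶜ \ {ω | ε ≤ Y (m + 1) ω} := by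
      rw [hit_succ, Set.compl_union, Set.sdiff_eq]
    have := ih fun k hk hkm => hstep k hk (hkm.trans m.lt_succ_self)
    rw [measure_split, compl_eq]
    linarith

theorem mul_measureReal_exists_le_integral [IsFiniteMeasure P] {Y : ℕ → Ω → ℝ} {l m : ℕ} {ε : ℝ}
    (hadapted : ∀ k, Measurable[ℱ k] (Y k)) (hint : ∀ k, Integrable (Y k) P)
    (hnonneg : ∀ k ω, 0 ≤ Y k ω)
    (hstep : ∀ k, l ≤ k → k < m → P[Y (k + 1) | ℱ k] ≤ᵐ[P] Y k) :
    ε * P.real {ω | ∃ k ∈ Finset.Icc l m, ε ≤ Y k ω} ≤ ∫ ω, Y l ω ∂P := by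
  rcases le_or_gt l m with hlm | hml
  · exact (le_add_of_nonneg_right (integral_nonneg fun ω => hnonneg m ω)).trans
      (mul_measureReal_add_setIntegral_compl_le hadapted hint hstep hlm)
  · simpa [Finset.Icc_eq_empty hml.not_ge] using integral_nonneg fun ω => hnonneg l ω

theorem condExp_mul_exp_sub_le {m : MeasurableSpace Ω} {Z X A : Ω → ℝ} {t c : ℝ}
    (hZ : Measurable[m] Z) (hZ0 : ∀ ω, 0 ≤ Z ω) (hA : Measurable[m] A)
    (hintX : Integrable (fun ω => Real.exp (t * X ω)) P)
    (hint : Integrable (fun ω => Z ω * Real.exp (t * (X ω - A ω) - c)) P)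
    (hstep : P[fun ω => Real.exp (t * X ω) | m] ≤ᵐ[P] fun ω => Real.exp (t * A ω + c)) :
    P[fun ω => Z ω * Real.exp (t * (X ω - A ω) - c) | m] ≤ᵐ[P] Z := by
  have factor : (fun ω => Z ω * Real.exp (t * (X ω - A ω) - c)) =
      (fun ω => Z ω * Real.exp (-(t * A ω + c))) * fun ω => Real.exp (t * X ω) := by
    ext ω
    rw [Pi.mul_apply, mul_assoc, ← Real.exp_add]
    ring_nf
  have prefix_meas : Measurable[m] fun ω => Z ω * Real.exp (-(t * A ω + c)) :=
    hZ.mul (Real.measurable_exp.comp ((hA.const_mul t).add_const c).neg)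
  rw [factor] at hint ⊢
  filter_upwards [condExp_mul_of_stronglyMeasurable_left prefix_meas.stronglyMeasurable hint hintX,
    hstep] with ω h_pull h_le
  rw [h_pull, Pi.mul_apply]
  calc _ ≤ Z ω * Real.exp (-(t * A ω + c)) * Real.exp (t * A ω + c) := by
        gcongr
        exact mul_nonneg (hZ0 ω) (Real.exp_pos _).le
    _ = Z ω := by rw [mul_assoc, ← Real.exp_add, neg_add_cancel, Real.exp_zero, mul_one]

theorem measureReal_exists_le_sum_sub_le [IsProbabilityMeasure P] {X A : ℕ → Ω → ℝ} {l m : ℕ}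
    {t c x : ℝ} (hX : ∀ i, Measurable[ℱ (i + 1)] (X i)) (hA : ∀ i, Measurable[ℱ i] (A i))
    (hintX : ∀ i, Integrable (fun ω => Real.exp (t * X i ω)) P)
    (hint : ∀ k, Integrable (fun ω => Real.exp (t * ∑ i ∈ Finset.Ico l k, (X i ω - A i ω))) P)
    (hstep : ∀ i, l ≤ i → i < m →
      P[fun ω => Real.exp (t * X i ω) | ℱ i] ≤ᵐ[P] fun ω => Real.exp (t * A i ω + c))
    (hc : 0 ≤ c) :
    P.real {ω | ∃ k ∈ Finset.Icc l m, x ≤ t * ∑ i ∈ Finset.Ico l k, (X i ω - A i ω)} ≤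
      Real.exp (c * (m - l) - x) := by
  set Y : ℕ → Ω → ℝ := fun k ω =>
    Real.exp (-(c * (k - l))) * Real.exp (t * ∑ i ∈ Finset.Ico l k, (X i ω - A i ω)) with Y_def
  have adapted (k : ℕ) : Measurable[ℱ k] (Y k) := by
    have adapted_sum : Measurable[ℱ k] fun ω => ∑ i ∈ Finset.Ico l k, (X i ω - A i ω) :=
      Finset.measurable_fun_sum _ fun i hi =>
        ((hX i).mono (ℱ.mono (Finset.mem_Ico.1 hi).2) le_rfl).sub
          ((hA i).mono (ℱ.mono (Finset.mem_Ico.1 hi).2.le) le_rfl)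
    exact (Real.measurable_exp.comp (adapted_sum.const_mul t)).const_mul _
  have intY (k : ℕ) : Integrable (Y k) P := (hint k).const_mul _
  have step (k : ℕ) (hk : l ≤ k) (hkm : k < m) : P[Y (k + 1) | ℱ k] ≤ᵐ[P] Y k := by
    have next : Y (k + 1) = fun ω => Y k ω * Real.exp (t * (X k ω - A k ω) - c) := by
      ext ω
      simp only [Y_def, ← Real.exp_add, Finset.sum_Ico_succ_top hk]
      push_cast
      ring_nf
    rw [next]
    exact condExp_mul_exp_sub_le (adapted k) (fun ω => by positivity) (hA k) (hintX k)
      (next ▸ intY (k + 1)) (hstep k hk hkm)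
  have maximal := mul_measureReal_exists_le_integral (ε := Real.exp (x - c * (m - l))) adapted intY
    (fun k ω => by positivity) step
  have start : ∫ ω, Y l ω ∂P = 1 := by simp [Y_def]
  have sub_event : {ω | ∃ k ∈ Finset.Icc l m, x ≤ t * ∑ i ∈ Finset.Ico l k, (X i ω - A i ω)} ⊆
      {ω | ∃ k ∈ Finset.Icc l m, Real.exp (x - c * (m - l)) ≤ Y k ω} := by
    rintro ω ⟨k, hk, hx⟩
    have : c * (k - l : ℝ) ≤ c * (m - l) := by
      gcongr
      exact (Finset.mem_Icc.1 hk).2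
    refine ⟨k, hk, ?_⟩
    simp only [Y_def, ← Real.exp_add]
    exact Real.exp_le_exp.2 (by linarith)
  rw [start] at maximal
  calc _ ≤ P.real _ := measureReal_mono sub_event
    _ ≤ (Real.exp (x - c * (m - l)))⁻¹ := by
      rw [← one_div, le_div_iff₀' (Real.exp_pos _)]
      exact maximal
    _ = Real.exp (c * (m - l) - x) := by rw [← Real.exp_neg, neg_sub]

theorem measureReal_exists_le_abs_sum_sub_le [IsProbabilityMeasure P] {X A : ℕ → Ω → ℝ} {l m : ℕ}
    {t c x : ℝ} (hX : ∀ i, Measurable[ℱ (i + 1)] (X i)) (hA : ∀ i, Measurable[ℱ i] (A i))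
    (hintX : ∀ θ i, Integrable (fun ω => Real.exp (θ * X i ω)) P)
    (hint : ∀ θ k, Integrable (fun ω => Real.exp (θ * ∑ i ∈ Finset.Ico l k, (X i ω - A i ω))) P)
    (hstep : ∀ θ, |θ| = t → ∀ i, l ≤ i → i < m →
      P[fun ω => Real.exp (θ * X i ω) | ℱ i] ≤ᵐ[P] fun ω => Real.exp (θ * A i ω + c))
    (hc : 0 ≤ c) (ht : 0 ≤ t) :
    P.real {ω | ∃ k ∈ Finset.Icc l m, x ≤ |∑ i ∈ Finset.Ico l k, (X i ω - A i ω)|} ≤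
      2 * Real.exp (c * (m - l) - t * x) := by
  have upper := measureReal_exists_le_sum_sub_le (x := t * x) hX hA (hintX t) (hint t)
    (hstep t (abs_of_nonneg ht)) hc
  have lower := measureReal_exists_le_sum_sub_le (x := t * x) hX hA (hintX (-t)) (hint (-t))
    (hstep (-t) (by rw [abs_neg, abs_of_nonneg ht])) hc
  rw [two_mul]
  refine (measureReal_mono ?_).trans ((measureReal_union_le _ _).trans (add_le_add upper lower))
  rintro ω ⟨k, hk, hx⟩
  rcases le_abs.1 hx with h | h
  · exact Or.inl ⟨k, hk, by gcongr⟩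
  · exact Or.inr ⟨k, hk, by rw [neg_mul, ← mul_neg]; gcongr⟩

end MaximalInequality

section Resampling

variable {ι : Type*} [Fintype ι] [DecidableEq ι] {X : ι → Type*} [∀ i, MeasurableSpace (X i)]
  (μ : ∀ i, Measure (X i)) [∀ i, IsProbabilityMeasure (μ i)]

theorem measurePreserving_update (i : ι) :
    MeasurePreserving (fun z : (∀ j, X j) × X i => Function.update z.1 i z.2)
      ((Measure.pi μ).prod (μ i)) (Measure.pi μ) := by
  have meas : Measurable fun z : (∀ j, X j) × X i => Function.update z.1 i z.2 := by
    refine measurable_pi_lambda _ fun j => ?_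
    by_cases hj : j = i
    · subst hj; simpa using measurable_snd
    · simpa [hj] using measurable_pi_iff.1 measurable_fst j
  refine ⟨meas, (Measure.pi_eq fun s hs => ?_).symm⟩
  have preimage : (fun z : (∀ j, X j) × X i => Function.update z.1 i z.2) ⁻¹' Set.univ.pi s =
      Set.univ.pi (Function.update s i Set.univ) ×ˢ s i := by
    ext z
    simp only [Set.mem_preimage, Set.mem_univ_pi, Set.mem_prod]
    constructor
    · refine fun h => ⟨fun j => ?_, by simpa using h i⟩
      by_cases hj : j = i
      · subst hj; simp
      · simpa [hj] using h j
    · intro h j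
      by_cases hj : j = i
      · subst hj; simpa using h.2
      · simpa [hj] using h.1 j
  rw [Measure.map_apply meas (MeasurableSet.univ_pi hs), preimage, Measure.prod_prod,
    Measure.pi_pi, ← Finset.mul_prod_erase _ _ (Finset.mem_univ i),
    ← Finset.mul_prod_erase _ (fun j => μ j (s j)) (Finset.mem_univ i), Function.update_self,
    measure_univ, one_mul, mul_comm]
  congr 1
  exact Finset.prod_congr rfl fun j hj => by rw [Function.update_of_ne (Finset.ne_of_mem_erase hj)]

theorem integral_integral_update {i : ι} {H : (∀ j, X j) → ℝ} (hH : Integrable H (Measure.pi μ)) :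
    ∫ g, ∫ x, H (Function.update g i x) ∂μ i ∂Measure.pi μ = ∫ g, H g ∂Measure.pi μ := by
  have preserving := measurePreserving_update μ i
  rw [← preserving.map_eq] at hH
  calc _ = ∫ z, H (Function.update z.1 i z.2) ∂(Measure.pi μ).prod (μ i) :=
        integral_integral (f := fun g x => H (Function.update g i x))
          ((integrable_map_measure hH.1 preserving.aemeasurable).1 hH)
    _ = _ := by rw [← integral_map preserving.aemeasurable hH.1, preserving.map_eq]

end Resampling

noncomputable section SizeBiasedMean

variable {ι : Type*}

/-- The mean of `h` at an element of `T` drawn with probability proportional to `w`, that is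
`E[h(v(k+1)) | v(1), …, v(k)]` when `T` is the set of the vertices not yet explored. -/
def sizeBiasedMean (w : ι → ℝ) (T : Finset ι) (h : ι → ℝ) : ℝ :=
  (∑ j ∈ T, w j * h j) / ∑ j ∈ T, w j

variable {w : ι → ℝ} {T : Finset ι} {h h' : ι → ℝ}

theorem sizeBiasedMean_add :
    sizeBiasedMean w T (fun j => h j + h' j) = sizeBiasedMean w T h + sizeBiasedMean w T h' := by
  simp only [sizeBiasedMean, mul_add, Finset.sum_add_distrib, add_div]

theorem sizeBiasedMean_const_mul (c : ℝ) :
    sizeBiasedMean w T (fun j => c * h j) = c * sizeBiasedMean w T h := by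
  simp only [sizeBiasedMean, mul_left_comm _ c, ← Finset.mul_sum, mul_div_assoc]

theorem sizeBiasedMean_const (hw : 0 < ∑ j ∈ T, w j) (c : ℝ) :
    sizeBiasedMean w T (fun _ => c) = c := by
  rw [sizeBiasedMean, ← Finset.sum_mul, mul_div_cancel_left₀ _ hw.ne']

theorem sizeBiasedMean_mono (hw : ∀ j ∈ T, 0 ≤ w j) (H : ∀ j ∈ T, h j ≤ h' j) :
    sizeBiasedMean w T h ≤ sizeBiasedMean w T h' :=
  div_le_div_of_nonneg_right
    (Finset.sum_le_sum fun j hj => mul_le_mul_of_nonneg_left (H j hj) (hw j hj))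
    (Finset.sum_nonneg hw)

theorem sizeBiasedMean_nonneg (hw : ∀ j ∈ T, 0 ≤ w j) (H : ∀ j ∈ T, 0 ≤ h j) :
    0 ≤ sizeBiasedMean w T h :=
  div_nonneg (Finset.sum_nonneg fun j hj => mul_nonneg (hw j hj) (H j hj)) (Finset.sum_nonneg hw)

theorem sizeBiasedMean_le_two_mul [Fintype ι] {B : ℝ} (hw : ∀ j, 0 ≤ w j)
    (hsum : 0 < ∑ j, w j) (hT : ∑ j, w j ≤ 2 * ∑ j ∈ T, w j) (hh : ∀ j, 0 ≤ h j)
    (hB : ∑ j, w j * h j ≤ B * ∑ j, w j) :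
    sizeBiasedMean w T h ≤ 2 * B := by
  have hsumT : 0 < ∑ j ∈ T, w j := by linarith
  have B_nonneg : 0 ≤ B := nonneg_of_mul_nonneg_left
    ((Finset.sum_nonneg fun j _ => mul_nonneg (hw j) (hh j)).trans hB) hsum
  rw [sizeBiasedMean, div_le_iff₀ hsumT]
  calc ∑ j ∈ T, w j * h j ≤ ∑ j, w j * h j :=
        Finset.sum_le_univ_sum_of_nonneg fun j => mul_nonneg (hw j) (hh j)
    _ ≤ B * ∑ j, w j := hB
    _ ≤ B * (2 * ∑ j ∈ T, w j) := by gcongr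
    _ = _ := by ring

theorem sizeBiasedMean_exp_le {V t : ℝ} (hw : ∀ j ∈ T, 0 ≤ w j) (hsum : 0 < ∑ j ∈ T, w j)
    (ht : ∀ j ∈ T, |t * h j| ≤ 1) (hV : sizeBiasedMean w T (fun j => h j ^ 2) ≤ V) :
    sizeBiasedMean w T (fun j => Real.exp (t * h j)) ≤
      Real.exp (t * sizeBiasedMean w T h + t ^ 2 * V) := by
  have exp_le (j : ι) (hj : j ∈ T) :
      Real.exp (t * h j) ≤ 1 + (t * h j + t ^ 2 * h j ^ 2) := by
    have := (abs_le.1 (Real.abs_exp_sub_one_sub_id_le (ht j hj))).2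
    linarith [mul_pow t (h j) 2]
  calc _ ≤ sizeBiasedMean w T (fun j => 1 + (t * h j + t ^ 2 * h j ^ 2)) :=
        sizeBiasedMean_mono hw exp_le
    _ = 1 + (t * sizeBiasedMean w T h + t ^ 2 * sizeBiasedMean w T fun j => h j ^ 2) := by
      rw [sizeBiasedMean_add, sizeBiasedMean_add, sizeBiasedMean_const hsum,
        sizeBiasedMean_const_mul, sizeBiasedMean_const_mul]
    _ ≤ t * sizeBiasedMean w T h + t ^ 2 * V + 1 := by
      linarith [mul_le_mul_of_nonneg_left hV (sq_nonneg t)]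
    _ ≤ _ := Real.add_one_le_exp _

theorem abs_sizeBiasedMean_sub_univ_le [Fintype ι] [DecidableEq ι] {B η : ℝ} (hw : ∀ j, 0 ≤ w j)
    (hsum : 0 < ∑ j, w j) (hh : ∀ j, 0 ≤ h j) (hη : η ≤ 1 / 2)
    (hT : ∑ j ∈ Tᶜ, w j ≤ η * ∑ j, w j) (hB : ∑ j, w j * h j ≤ B * ∑ j, w j)
    (hTB : ∑ j ∈ Tᶜ, w j * h j ≤ B * η * ∑ j, w j) :
    |sizeBiasedMean w T h - sizeBiasedMean w Finset.univ h| ≤ 2 * B * η := by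
  have hwh (j : ι) : 0 ≤ w j * h j := mul_nonneg (hw j) (hh j)
  have split_w := Finset.sum_add_sum_compl T w
  have split_wh := Finset.sum_add_sum_compl T fun j => w j * h j
  have compl_nonneg := Finset.sum_nonneg fun j (_ : j ∈ Tᶜ) => hw j
  have compl_wh_nonneg := Finset.sum_nonneg fun j (_ : j ∈ Tᶜ) => hwh j
  have wh_nonneg := Finset.sum_nonneg fun j (_ : j ∈ Finset.univ) => hwh j
  rw [sizeBiasedMean, sizeBiasedMean]
  set L := ∑ j, w j
  set a := ∑ j, w j * h j
  set L' := ∑ j ∈ Tᶜ, w j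
  set a' := ∑ j ∈ Tᶜ, w j * h j
  have sum_T : ∑ j ∈ T, w j = L - L' := by linarith
  have L'_le : L' ≤ L / 2 := by nlinarith
  have mean_nonneg : 0 ≤ a / L := by positivity
  have mean_le : a / L ≤ B := (div_le_iff₀ hsum).2 hB
  have hpos : 0 < L - L' := by linarith
  have difference : (L - L') * ((∑ j ∈ T, w j * h j) / (L - L') - a / L) = a / L * L' - a' := by
    field_simp
    linear_combination L * split_wh
  have numerator_le : |a / L * L' - a'| ≤ B * η * L :=
    abs_sub_le_of_nonneg_of_le (by positivity)
      ((mul_le_mul mean_le hT compl_nonneg (mean_nonneg.trans mean_le)).trans_eq (by ring))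
      compl_wh_nonneg hTB
  have Bη_nonneg : 0 ≤ B * η := nonneg_of_mul_nonneg_left (compl_wh_nonneg.trans hTB) hsum
  rw [sum_T, eq_div_of_mul_eq hpos.ne' ((mul_comm _ _).trans difference), abs_div,
    abs_of_pos hpos, div_le_iff₀ hpos]
  nlinarith

end SizeBiasedMean

noncomputable section MeanNeighbours

variable {ι : Type*} {w : ι → ℝ} {p : ℝ}

/-- The probability that `i` and `j` are adjacent in `G(W, p)`. -/
def edgeProb (w : ι → ℝ) (p : ℝ) (i j : ι) : ℝ := 1 - Real.exp (-(w i * w j * p))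

theorem edgeProb_nonneg (hw : ∀ j, 0 < w j) (hp : 0 ≤ p) (i j : ι) : 0 ≤ edgeProb w p i j :=
  sub_nonneg.2 (Real.exp_le_one_iff.2 (neg_nonpos.2
    (mul_nonneg (mul_pos (hw i) (hw j)).le hp)))

theorem edgeProb_le_one (i j : ι) : edgeProb w p i j ≤ 1 :=
  sub_le_self _ (Real.exp_pos _).le

theorem edgeProb_le_mul (i j : ι) : edgeProb w p i j ≤ w i * w j * p := by
  rw [edgeProb]
  linarith [Real.one_sub_le_exp_neg (w i * w j * p)]

theorem mul_sub_sq_le_edgeProb (hw : ∀ j, 0 < w j) (hp : 0 ≤ p) (i j : ι) :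
    w i * w j * p - (w i * w j * p) ^ 2 ≤ edgeProb w p i j := by
  rw [edgeProb]
  set x := w i * w j * p
  have hx : 0 ≤ x := mul_nonneg (mul_pos (hw i) (hw j)).le hp
  have : Real.exp (-x) ≤ 1 - x + x ^ 2 := by
    rw [Real.exp_neg, inv_le_iff_one_le_mul₀ (Real.exp_pos x)]
    calc (1 : ℝ) ≤ (1 - x + x ^ 2) * (x + 1) := by nlinarith [pow_nonneg hx 3]
      _ ≤ (1 - x + x ^ 2) * Real.exp x :=
        mul_le_mul_of_nonneg_left (Real.add_one_le_exp x) (by nlinarith [sq_nonneg (x - 1)])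
  linarith

variable [DecidableEq ι]

/-- The mean number of neighbours in `T` of the vertex `j`. -/
def meanNbrs (w : ι → ℝ) (p : ℝ) (T : Finset ι) (j : ι) : ℝ := ∑ b ∈ T.erase j, edgeProb w p j b

theorem meanNbrs_nonneg (hw : ∀ j, 0 < w j) (hp : 0 ≤ p) (T : Finset ι) (j : ι) :
    0 ≤ meanNbrs w p T j :=
  Finset.sum_nonneg fun b _ => edgeProb_nonneg hw hp j b

theorem meanNbrs_le (hw : ∀ j, 0 < w j) (hp : 0 ≤ p) (T : Finset ι) (j : ι) :
    meanNbrs w p T j ≤ w j * p * ∑ b ∈ T, w b := by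
  calc meanNbrs w p T j ≤ ∑ b ∈ T.erase j, w j * w b * p :=
        Finset.sum_le_sum fun b _ => edgeProb_le_mul j b
    _ ≤ ∑ b ∈ T, w j * w b * p := Finset.sum_le_sum_of_subset_of_nonneg (Finset.erase_subset _ _)
        fun b _ _ => mul_nonneg (mul_pos (hw j) (hw b)).le hp
    _ = w j * p * ∑ b ∈ T, w b := by
        rw [Finset.mul_sum]
        exact Finset.sum_congr rfl fun b _ => by ring

theorem le_meanNbrs_add (hw : ∀ j, 0 < w j) (hp : 0 ≤ p) (T : Finset ι) (j : ι) :
    w j * p * ∑ b ∈ T, w b ≤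
      meanNbrs w p T j + (w j ^ 2 * p + w j ^ 2 * p ^ 2 * ∑ b ∈ T, w b ^ 2) := by
  have off_diagonal : w j * p * ∑ b ∈ T.erase j, w b ≤
      meanNbrs w p T j + w j ^ 2 * p ^ 2 * ∑ b ∈ T.erase j, w b ^ 2 := by
    rw [meanNbrs, Finset.mul_sum, Finset.mul_sum, ← Finset.sum_add_distrib]
    exact Finset.sum_le_sum fun b _ => by linarith [mul_sub_sq_le_edgeProb hw hp j b]
  have sum_erase : ∑ b ∈ T, w b ≤ w j + ∑ b ∈ T.erase j, w b := by
    rw [← Finset.sum_insert (Finset.notMem_erase j T)]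
    exact Finset.sum_le_sum_of_subset_of_nonneg
      (Finset.subset_insert_iff.2 subset_rfl) fun b _ _ => (hw b).le
  have sum_sq_erase : ∑ b ∈ T.erase j, w b ^ 2 ≤ ∑ b ∈ T, w b ^ 2 :=
    Finset.sum_le_sum_of_subset_of_nonneg (Finset.erase_subset _ _) fun b _ _ => sq_nonneg _
  calc w j * p * ∑ b ∈ T, w b ≤ w j * p * (w j + ∑ b ∈ T.erase j, w b) :=
        mul_le_mul_of_nonneg_left sum_erase (mul_nonneg (hw j).le hp)
    _ ≤ w j ^ 2 * p + (meanNbrs w p T j + w j ^ 2 * p ^ 2 * ∑ b ∈ T.erase j, w b ^ 2) := by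
        linarith
    _ ≤ _ := by
        have := mul_le_mul_of_nonneg_left sum_sq_erase (by positivity : 0 ≤ w j ^ 2 * p ^ 2)
        linarith

end MeanNeighbours

noncomputable section SizeBiasedOrder

variable {n : ℕ} {w : Fin n → ℝ}

/-- The vertices outside `{v(1), …, v(k)}`, where `v(i + 1)` is encoded as `v i`. -/
def unexplored (v : Fin n → Fin n) (k : ℕ) : Finset (Fin n) :=
  {j | ∀ i : Fin n, (i : ℕ) < k → v i ≠ j}

theorem mem_unexplored {v : Fin n → Fin n} {k : ℕ} {j : Fin n} :
    j ∈ unexplored v k ↔ ∀ i : Fin n, (i : ℕ) < k → v i ≠ j := by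
  simp [unexplored]

theorem unexplored_zero (v : Fin n → Fin n) : unexplored v 0 = Finset.univ := by
  simp [unexplored]

theorem unexplored_succ (v : Fin n → Fin n) (k : Fin n) :
    unexplored v (k + 1) = (unexplored v k).erase (v k) := by
  ext j
  simp only [mem_unexplored, Finset.mem_erase, Nat.lt_succ_iff_lt_or_eq, ← Fin.ext_iff]
  grind

theorem dependsOn_unexplored (k : ℕ) :
    DependsOn (fun v : Fin n → Fin n => unexplored v k) {i | (i : ℕ) < k} := by
  intro v v' h
  ext j
  simp only [mem_unexplored]
  exact forall₂_congr fun i hi => by rw [h i hi]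

theorem compl_unexplored (v : Fin n → Fin n) (k : ℕ) :
    (unexplored v k)ᶜ = ({i : Fin n | (i : ℕ) < k} : Finset (Fin n)).image v := by
  ext j
  simp [mem_unexplored]

theorem card_filter_val_lt (n k : ℕ) : ({i : Fin n | (i : ℕ) < k} : Finset (Fin n)).card ≤ k := by
  rw [← Finset.card_map Fin.valEmbedding]
  refine (Finset.card_le_card fun i hi => ?_).trans_eq (Finset.card_range k)
  simp only [Finset.mem_map, Finset.mem_filter_univ, Fin.valEmbedding_apply] at hi
  grind

theorem card_compl_unexplored_le (v : Fin n → Fin n) (k : ℕ) : (unexplored v k)ᶜ.card ≤ k :=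
  compl_unexplored v k ▸ Finset.card_image_le.trans (card_filter_val_lt n k)

theorem unexplored_of_injective {v : Fin n → Fin n} (hv : v.Injective) (k : ℕ) :
    unexplored v k = ({i : Fin n | k ≤ (i : ℕ)} : Finset (Fin n)).image v := by
  ext j
  obtain ⟨i, rfl⟩ := (Finite.injective_iff_surjective.1 hv) j
  simp only [mem_unexplored, ne_eq, hv.eq_iff, Finset.mem_image, Finset.mem_filter_univ,
    exists_eq_right]
  exact ⟨fun h => not_lt.1 fun hi => h i hi rfl, fun h i' hi' heq => (heq ▸ hi').not_ge h⟩

theorem apply_mem_unexplored {v : Fin n → Fin n} (hv : v.Injective) (k : Fin n) :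
    v k ∈ unexplored v k := by
  rw [unexplored_of_injective hv]
  exact Finset.mem_image_of_mem _ (by simp)

theorem sum_unexplored_pos (hw : ∀ j, 0 < w j) {v : Fin n → Fin n} (hv : v.Injective)
    (k : Fin n) : 0 < ∑ j ∈ unexplored v k, w j :=
  Finset.sum_pos (fun j _ => hw j) ⟨_, apply_mem_unexplored hv k⟩

/-- The probability that the first `k` vertices of the size-biased order are those of `v`. -/
def prefixProb (w : Fin n → ℝ) (k : ℕ) (v : Fin n → Fin n) : ℝ :=
  ∏ i ∈ Finset.univ.filter fun i : Fin n => (i : ℕ) < k, w (v i) / ∑ j ∈ unexplored v i, w j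

theorem prefixProb_succ (k : Fin n) (v : Fin n → Fin n) :
    prefixProb w (k + 1) v = prefixProb w k v * (w (v k) / ∑ j ∈ unexplored v k, w j) := by
  have insert_eq : ({i : Fin n | (i : ℕ) < k + 1} : Finset (Fin n)) =
      insert k ({i : Fin n | (i : ℕ) < k} : Finset (Fin n)) := by
    ext i; simp [le_iff_eq_or_lt, Fin.ext_iff, -Fin.val_fin_le]
  rw [prefixProb, insert_eq, Finset.prod_insert (by simp), mul_comm, prefixProb]

theorem prefixProb_nonneg (hw : ∀ j, 0 ≤ w j) (k : ℕ) (v : Fin n → Fin n) :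
    0 ≤ prefixProb w k v :=
  Finset.prod_nonneg fun _ _ => div_nonneg (hw _) (Finset.sum_nonneg fun j _ => hw j)

theorem dependsOn_prefixProb (k : ℕ) : DependsOn (prefixProb w k) {i | (i : ℕ) < k} := by
  intro v v' h
  refine Finset.prod_congr rfl fun i hi => ?_
  have hik : (i : ℕ) < k := by simpa using hi
  have same : unexplored v i = unexplored v' i :=
    dependsOn_unexplored (i : ℕ) fun i' hi' => h i' (lt_trans hi' hik)
  rw [h i hik, same]

theorem prefixProb_perm (σ : Equiv.Perm (Fin n)) :
    prefixProb w n σ =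
      ∏ i, w (σ i) / ((∑ k, w k) - ∑ k ∈ Finset.univ.filter fun k => k < i, w (σ k)) := by
  have all : ({i : Fin n | (i : ℕ) < n} : Finset (Fin n)) = Finset.univ := by ext i; simp
  rw [prefixProb, all]
  refine Finset.prod_congr rfl fun i _ => ?_
  rw [← Finset.sum_compl_add_sum (unexplored σ i) w, compl_unexplored,
    Finset.sum_image σ.injective.injOn]
  simp only [Fin.lt_def, add_sub_cancel_left]

/-- Given the first `k` values of a uniform permutation, its next value is exchangeable with
all the later ones. -/
theorem sub_mul_sum_perm_apply {h : (Fin n → Fin n) → Fin n → ℝ} {k : Fin n}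
    (hh : DependsOn h {i | i < k}) :
    ((n - k : ℕ) : ℝ) * ∑ σ : Equiv.Perm (Fin n), h σ (σ k) =
      ∑ σ : Equiv.Perm (Fin n), ∑ j ∈ unexplored σ k, h σ j := by
  have exchange (i : Fin n) (hi : k ≤ i) :
      ∑ σ : Equiv.Perm (Fin n), h σ (σ i) = ∑ σ : Equiv.Perm (Fin n), h σ (σ k) := by
    rw [← Equiv.sum_comp (Equiv.mulRight (Equiv.swap i k))]
    refine Finset.sum_congr rfl fun σ _ => ?_
    have same : h ⇑(σ * Equiv.swap i k) = h σ := hh fun j (hj : j < k) => by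
      rw [Equiv.Perm.mul_apply, Equiv.swap_apply_of_ne_of_ne (hj.trans_le hi).ne hj.ne]
    rw [Equiv.coe_mulRight, Equiv.Perm.mul_apply, Equiv.swap_apply_left, same]
  have card_later : ({i : Fin n | k ≤ i} : Finset (Fin n)).card = n - k := by
    rw [← Fin.card_Ici k]; congr 1; ext i; simp
  calc _ = ∑ i : Fin n with k ≤ i, ∑ σ : Equiv.Perm (Fin n), h σ (σ k) := by
        rw [Finset.sum_const, card_later, nsmul_eq_mul]
    _ = ∑ i : Fin n with k ≤ i, ∑ σ : Equiv.Perm (Fin n), h σ (σ i) :=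
        Finset.sum_congr rfl fun i hi => (exchange i (by simpa using hi)).symm
    _ = _ := by
        rw [Finset.sum_comm]
        refine Finset.sum_congr rfl fun σ _ => ?_
        rw [unexplored_of_injective σ.injective, Finset.sum_image σ.injective.injOn]
        simp only [Fin.le_def]

theorem sub_mul_sum_prefixProb_succ {h : (Fin n → Fin n) → Fin n → ℝ} {k : Fin n}
    (hh : DependsOn h {i | i < k}) :
    ((n - k : ℕ) : ℝ) * ∑ σ : Equiv.Perm (Fin n), prefixProb w (k + 1) σ * h σ (σ k) =
      ∑ σ : Equiv.Perm (Fin n), prefixProb w k σ * sizeBiasedMean w (unexplored σ k) (h σ) := by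
  have determined : DependsOn (fun v j =>
      prefixProb w k v * (w j / ∑ j ∈ unexplored v k, w j) * h v j) {i | i < k} := by
    intro v v' hv
    simp only [hh hv, dependsOn_prefixProb (w := w) (k : ℕ) hv, dependsOn_unexplored (k : ℕ) hv]
  simp only [prefixProb_succ]
  rw [sub_mul_sum_perm_apply determined]
  refine Finset.sum_congr rfl fun σ _ => ?_
  rw [sizeBiasedMean, Finset.sum_div, Finset.mul_sum]
  exact Finset.sum_congr rfl fun j _ => by ring

theorem factorial_mul_sum_prefixProb (hw : ∀ j, 0 < w j) {F : (Fin n → Fin n) → ℝ} {k d : ℕ}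
    (hkd : k + d = n) (hF : DependsOn F {i : Fin n | (i : ℕ) < k}) :
    (d.factorial : ℝ) * ∑ σ : Equiv.Perm (Fin n), prefixProb w n σ * F σ =
      ∑ σ : Equiv.Perm (Fin n), prefixProb w k σ * F σ := by
  induction d generalizing k with
  | zero => simp [← hkd]
  | succ d ih =>
    have hF' : DependsOn F {i : Fin n | (i : ℕ) < k + 1} :=
      fun v v' h => hF fun i hi => h i (lt_trans hi k.lt_succ_self)
    obtain ⟨k, rfl⟩ : ∃ k' : Fin n, (k' : ℕ) = k := ⟨⟨k, by omega⟩, rfl⟩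
    have next := sub_mul_sum_prefixProb_succ (w := w) (k := k) (h := fun v _ => F v)
      fun v v' h => by simp only [hF h]
    have remaining : n - k = d + 1 := by omega
    rw [Nat.factorial_succ, Nat.cast_mul, mul_assoc, ih (by omega) hF', ← remaining, next]
    exact Finset.sum_congr rfl fun σ _ => by
      rw [sizeBiasedMean_const (sum_unexplored_pos hw σ.injective k)]

theorem sum_prefixProb (hw : ∀ j, 0 < w j) :
    ∑ σ : Equiv.Perm (Fin n), prefixProb w n σ = 1 := by
  have total := factorial_mul_sum_prefixProb hw (F := fun _ => 1) (k := 0) (d := n) (zero_add n)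
    fun _ _ _ => rfl
  simpa [prefixProb, Fintype.card_perm, Nat.factorial_ne_zero] using total

theorem sum_prefixProb_mul_apply (hw : ∀ j, 0 < w j) {h : (Fin n → Fin n) → Fin n → ℝ}
    {k : Fin n} (hh : DependsOn h {i | i < k}) :
    ∑ σ : Equiv.Perm (Fin n), prefixProb w n σ * h σ (σ k) =
      ∑ σ : Equiv.Perm (Fin n), prefixProb w n σ * sizeBiasedMean w (unexplored σ k) (h σ) := by
  obtain ⟨d, hd⟩ : ∃ d, k + 1 + d = n := ⟨n - (k + 1), by omega⟩
  have apply_determined : DependsOn (fun v : Fin n → Fin n => h v (v k))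
      {i | (i : ℕ) < k + 1} := fun v v' hv => by
    have same : h v = h v' := hh fun i (hi : i < k) => hv i (Nat.lt_succ_of_lt hi)
    simp only [same, hv k (Nat.lt_succ_self _)]
  have mean_determined : DependsOn
      (fun v : Fin n → Fin n => sizeBiasedMean w (unexplored v k) (h v))
      {i | (i : ℕ) < k} := fun v v' hv => by
    simp only [hh hv, dependsOn_unexplored (k : ℕ) hv]
  have left := factorial_mul_sum_prefixProb hw hd apply_determined
  have right := factorial_mul_sum_prefixProb hw (d := d + 1) (by omega) mean_determined
  rw [← sub_mul_sum_prefixProb_succ hh, ← left, Nat.factorial_succ, Nat.cast_mul, mul_assoc,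
    show n - (k : ℕ) = d + 1 by omega] at right
  exact (mul_left_cancel₀ (by positivity)
    (mul_left_cancel₀ (by positivity) right)).symm

end SizeBiasedOrder

noncomputable section EdgeIndicators

variable {n : ℕ} {w : Fin n → ℝ} {p : ℝ}

theorem isProbabilityMeasure_bern {q : ℝ} (h0 : 0 ≤ q) (h1 : q ≤ 1) :
    IsProbabilityMeasure (bern q) := by
  refine ⟨?_⟩
  rw [bern, Measure.add_apply, Measure.smul_apply, Measure.smul_apply, measure_univ, measure_univ,
    smul_eq_mul, smul_eq_mul, mul_one, mul_one, ← ENNReal.ofReal_add (by linarith) h0,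
    sub_add_cancel, ENNReal.ofReal_one]

theorem integral_bern {q : ℝ} (h0 : 0 ≤ q) (h1 : q ≤ 1) (u : Bool → ℝ) :
    ∫ x, u x ∂bern q = (1 - q) * u false + q * u true := by
  rw [bern, integral_add_measure (.smul_measure (.of_finite) ENNReal.ofReal_ne_top)
    (.smul_measure (.of_finite) ENNReal.ofReal_ne_top), integral_smul_measure,
    integral_smul_measure, integral_dirac, integral_dirac, ENNReal.toReal_ofReal (by linarith),
    ENNReal.toReal_ofReal h0, smul_eq_mul, smul_eq_mul]

theorem edgeProb_min_max (i j : Fin n) : edgeProb w p (min i j) (max i j) = edgeProb w p i j := by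
  rcases le_total i j with h | h <;> simp [edgeProb, h, mul_comm (w i)]

theorem isProbabilityMeasure_graphMeasure (hw : ∀ j, 0 < w j) (hp : 0 ≤ p) :
    IsProbabilityMeasure (graphMeasure n w p) := by
  have (i j : Fin n) : IsProbabilityMeasure (bern (1 - Real.exp (-(w i * w j * p)))) :=
    isProbabilityMeasure_bern (edgeProb_nonneg hw hp i j) (edgeProb_le_one i j)
  rw [graphMeasure]
  infer_instance

/-- The indicator `Y(i, j)` of the edge `{i, j}`. -/
def edgeIndicator (g : Fin n → Fin n → Bool) (i j : Fin n) : Bool := g (min i j) (max i j)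

/-- The edge indicators obtained from `g` by changing `Y(i, j)` into `x`. -/
def setEdge (g : Fin n → Fin n → Bool) (i j : Fin n) (x : Bool) : Fin n → Fin n → Bool :=
  Function.update g (min i j) (Function.update (g (min i j)) (max i j) x)

theorem edgeIndicator_setEdge_self (g : Fin n → Fin n → Bool) (i j : Fin n) (x : Bool) :
    edgeIndicator (setEdge g i j x) i j = x := by
  simp [edgeIndicator, setEdge]

theorem edgeIndicator_setEdge_of_ne (g : Fin n → Fin n → Bool) {i j i' j' : Fin n} (x : Bool)
    (h : s(i', j') ≠ s(i, j)) :
    edgeIndicator (setEdge g i j x) i' j' = edgeIndicator g i' j' := by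
  have : min i' j' ≠ min i j ∨ max i' j' ≠ max i j := by
    by_contra! heq
    refine h (Sym2.eq_iff.2 ?_)
    grind
  rw [edgeIndicator, setEdge]
  rcases eq_or_ne (min i' j') (min i j) with hmin | hmin
  · rw [hmin, Function.update_self, Function.update_of_ne (this.resolve_left (not_not.2 hmin)),
      edgeIndicator, hmin]
  · rw [Function.update_of_ne hmin, edgeIndicator]

theorem integral_integral_setEdge (hw : ∀ j, 0 < w j) (hp : 0 ≤ p)
    (H : (Fin n → Fin n → Bool) → ℝ) (i j : Fin n) :
    ∫ g, ∫ x, H (setEdge g i j x) ∂bern (edgeProb w p i j) ∂graphMeasure n w p =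
      ∫ g, H g ∂graphMeasure n w p := by
  have (i j : Fin n) : IsProbabilityMeasure (bern (1 - Real.exp (-(w i * w j * p)))) :=
    isProbabilityMeasure_bern (edgeProb_nonneg hw hp i j) (edgeProb_le_one i j)
  rw [← edgeProb_min_max]
  set a := min i j
  set b := max i j
  set ν := fun a => Measure.pi fun b => bern (1 - Real.exp (-(w a * w b * p)))
  have fold (g : Fin n → Fin n → Bool) (r : Fin n → Bool) (x : Bool) :
      setEdge (Function.update g a r) i j x = Function.update g a (Function.update r b x) := by
    simp [setEdge, a, b]
  calc _ = ∫ g, ∫ r, ∫ x, H (setEdge (Function.update g a r) i j x)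
          ∂bern (edgeProb w p a b) ∂ν a ∂graphMeasure n w p :=
        (integral_integral_update ν (i := a)
          (H := fun g => ∫ x, H (setEdge g i j x) ∂bern (edgeProb w p a b)) .of_finite).symm
    _ = ∫ g, ∫ r, H (Function.update g a r) ∂ν a ∂graphMeasure n w p := by
        simp_rw [fold]
        refine integral_congr_ae (.of_forall fun g => ?_)
        exact integral_integral_update (fun b => bern (1 - Real.exp (-(w a * w b * p))))
          (i := b) (H := fun r => H (Function.update g a r)) .of_finite
    _ = _ := integral_integral_update ν (H := H) .of_finite

theorem integral_mul_prod_edgeIndicator (hw : ∀ j, 0 < w j) (hp : 0 ≤ p)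
    {F : (Fin n → Fin n → Bool) → ℝ} {a : Fin n} {B : Finset (Fin n)}
    (hF : ∀ b ∈ B, ∀ g x, F (setEdge g a b x) = F g) (u : Bool → ℝ) :
    ∫ g, F g * ∏ b ∈ B, u (edgeIndicator g a b) ∂graphMeasure n w p =
      (∫ g, F g ∂graphMeasure n w p) * ∏ b ∈ B, ∫ x, u x ∂bern (edgeProb w p a b) := by
  induction B using Finset.induction_on with
  | empty => simp
  | insert b B hb ih =>
    have others (g : Fin n → Fin n → Bool) (x : Bool) :
        ∏ b' ∈ B, u (edgeIndicator (setEdge g a b x) a b') =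
          ∏ b' ∈ B, u (edgeIndicator g a b') :=
      Finset.prod_congr rfl fun b' hb' => by
        rw [edgeIndicator_setEdge_of_ne]
        exact fun h => hb ((Sym2.congr_right.1 h) ▸ hb')
    rw [← integral_integral_setEdge hw hp _ a b, Finset.prod_insert hb, mul_left_comm,
      ← ih fun b' hb' => hF b' (Finset.mem_insert_of_mem hb'), ← integral_const_mul]
    refine integral_congr_ae (.of_forall fun g => ?_)
    simp only [Finset.prod_insert hb, edgeIndicator_setEdge_self, others,
      hF b (Finset.mem_insert_self b B)]
    rw [← integral_mul_const]
    exact integral_congr_ae (.of_forall fun x => by ring)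

end EdgeIndicators

noncomputable section ExplorationMeasure

variable {n : ℕ} {w : Fin n → ℝ} {p : ℝ}

theorem expMeasure'_eq_sum : expMeasure' n w p = ∑ σ : Equiv.Perm (Fin n),
    ENNReal.ofReal (prefixProb w n σ) • (graphMeasure n w p).map fun g => (g, ⇑σ) := by
  rw [expMeasure', Measure.sum_fintype]
  simp only [prefixProb_perm]

theorem isProbabilityMeasure_expMeasure' (hw : ∀ j, 0 < w j) (hp : 0 ≤ p) :
    IsProbabilityMeasure (expMeasure' n w p) := by
  have := isProbabilityMeasure_graphMeasure hw hp
  have map_univ (σ : Equiv.Perm (Fin n)) :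
      (graphMeasure n w p).map (fun g => (g, ⇑σ)) Set.univ = 1 := by
    rw [Measure.map_apply .of_discrete .univ, Set.preimage_univ, measure_univ]
  refine ⟨?_⟩
  simp only [expMeasure'_eq_sum, Measure.finsetSum_apply, Measure.smul_apply, smul_eq_mul,
    map_univ, mul_one]
  rw [← ENNReal.ofReal_sum_of_nonneg (f := fun σ : Equiv.Perm (Fin n) => prefixProb w n σ)
    fun σ _ => prefixProb_nonneg (fun j => (hw j).le) n σ, sum_prefixProb hw, ENNReal.ofReal_one]

theorem integral_expMeasure' (hw : ∀ j, 0 < w j) (hp : 0 ≤ p)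
    (H : (Fin n → Fin n → Bool) × (Fin n → Fin n) → ℝ) :
    ∫ ω, H ω ∂expMeasure' n w p =
      ∑ σ : Equiv.Perm (Fin n), prefixProb w n σ * ∫ g, H (g, σ) ∂graphMeasure n w p := by
  have := isProbabilityMeasure_graphMeasure hw hp
  rw [expMeasure'_eq_sum, integral_finsetSum_measure fun σ _ =>
    .smul_measure .of_finite ENNReal.ofReal_ne_top]
  refine Finset.sum_congr rfl fun σ _ => ?_
  rw [integral_smul_measure, ENNReal.toReal_ofReal (prefixProb_nonneg (fun j => (hw j).le) n σ),
    integral_map .of_discrete (.of_discrete), smul_eq_mul]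

theorem ae_injective_expMeasure' : ∀ᵐ ω ∂expMeasure' n w p, ω.2.Injective := by
  rw [expMeasure'_eq_sum, ae_iff, Measure.finsetSum_apply]
  refine Finset.sum_eq_zero fun σ _ => ?_
  rw [Measure.smul_apply, Measure.map_apply .of_discrete .of_discrete]
  simp [σ.injective]

end ExplorationMeasure

noncomputable section ExplorationFiltration

variable {n : ℕ} {w : Fin n → ℝ} {p : ℝ}

theorem measurable_comap_top_iff {α β γ : Type*} [Nonempty γ] [MeasurableSpace γ]
    [MeasurableSingletonClass γ] {h : α → β} {f : α → γ} :
    Measurable[MeasurableSpace.comap h ⊤] f ↔ f.FactorsThrough h := by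
  constructor
  · intro hf a b hab
    obtain ⟨t, -, ht⟩ := hf (measurableSet_singleton (f a))
    have ha : a ∈ h ⁻¹' t := ht ▸ rfl
    have hb : b ∈ f ⁻¹' {f a} := ht ▸ (show h b ∈ t from hab ▸ ha)
    exact hb.symm
  · intro hf
    obtain ⟨e, rfl⟩ := (Function.factorsThrough_iff f).1 hf
    exact fun s _ => ⟨e ⁻¹' s, trivial, rfl⟩

/-- What the first `k` steps of the exploration reveal: the vertices `v(1), …, v(k)` and the
indicators of all the edges at these vertices. -/
def history (n k : ℕ) (ω : (Fin n → Fin n → Bool) × (Fin n → Fin n)) :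
    {i : Fin n // (i : ℕ) < k} → Fin n × (Fin n → Bool) :=
  fun i => (ω.2 i, edgeIndicator ω.1 (ω.2 i))

/-- The filtration generated by the exploration; `explorationFiltration n k` is the information
available after `k` steps. -/
def explorationFiltration (n : ℕ) : Filtration ℕ
    (inferInstance : MeasurableSpace ((Fin n → Fin n → Bool) × (Fin n → Fin n))) where
  seq k := MeasurableSpace.comap (history n k) ⊤
  mono' k m hkm := by
    rintro _ ⟨t, -, rfl⟩
    exact ⟨(fun h i => h ⟨i.1, i.2.trans_le hkm⟩) ⁻¹' t, trivial, rfl⟩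
  le' _ _ _ := .of_discrete

theorem measurable_explorationFiltration_iff {γ : Type*} [Nonempty γ] [MeasurableSpace γ]
    [MeasurableSingletonClass γ] {k : ℕ}
    {f : (Fin n → Fin n → Bool) × (Fin n → Fin n) → γ} :
    Measurable[explorationFiltration n k] f ↔ f.FactorsThrough (history n k) :=
  measurable_comap_top_iff

theorem apply_eq_of_history_eq {k : ℕ} {ω ω' : (Fin n → Fin n → Bool) × (Fin n → Fin n)}
    (h : history n k ω = history n k ω') {i : Fin n} (hi : (i : ℕ) < k) : ω.2 i = ω'.2 i :=
  congrArg Prod.fst (congrFun h ⟨i, hi⟩)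

theorem unexplored_eq_of_history_eq {k : ℕ} {ω ω' : (Fin n → Fin n → Bool) × (Fin n → Fin n)}
    (h : history n k ω = history n k ω') : unexplored ω.2 k = unexplored ω'.2 k :=
  dependsOn_unexplored k fun _ hi => apply_eq_of_history_eq h hi

theorem history_eq_of_eqOn {k : ℕ} (g : Fin n → Fin n → Bool) {v v' : Fin n → Fin n}
    (h : ∀ i ∈ {i : Fin n | (i : ℕ) < k}, v i = v' i) :
    history n k (g, v) = history n k (g, v') := by
  funext i
  simp only [history, h i.1 i.2]

theorem history_setEdge {k : ℕ} {v : Fin n → Fin n} {a b : Fin n} (ha : a ∈ unexplored v k)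
    (hb : b ∈ unexplored v k) (g : Fin n → Fin n → Bool) (x : Bool) :
    history n k (setEdge g a b x, v) = history n k (g, v) := by
  funext i
  have explored_ne (j : Fin n) : s(v i, j) ≠ s(a, b) := fun h => by
    rcases Sym2.eq_iff.1 h with ⟨h, -⟩ | ⟨h, -⟩
    · exact mem_unexplored.1 ha i i.2 h
    · exact mem_unexplored.1 hb i i.2 h
  exact Prod.ext rfl (funext fun j => edgeIndicator_setEdge_of_ne g x (explored_ne j))

theorem measurable_unexplored (k : ℕ) (F : Finset (Fin n) → ℝ) :
    Measurable[explorationFiltration n k]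
      fun ω : (Fin n → Fin n → Bool) × (Fin n → Fin n) => F (unexplored ω.2 k) :=
  measurable_explorationFiltration_iff.2 fun _ _ h => congrArg F (unexplored_eq_of_history_eq h)

theorem integral_apply_eq_integral_sizeBiasedMean (hw : ∀ j, 0 < w j) (hp : 0 ≤ p) {k : Fin n}
    {h : (Fin n → Fin n → Bool) × (Fin n → Fin n) → Fin n → ℝ}
    (hh : h.FactorsThrough (history n k)) :
    ∫ ω, h ω (ω.2 k) ∂expMeasure' n w p =
      ∫ ω, sizeBiasedMean w (unexplored ω.2 k) (h ω) ∂expMeasure' n w p := by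
  have := isProbabilityMeasure_graphMeasure hw hp
  rw [integral_expMeasure' hw hp, integral_expMeasure' hw hp]
  simp only [← integral_const_mul]
  rw [← integral_finsetSum _ fun _ _ => .of_finite, ← integral_finsetSum _ fun _ _ => .of_finite]
  exact integral_congr_ae (.of_forall fun g =>
    sum_prefixProb_mul_apply hw (h := fun v => h (g, v)) fun v v' hv =>
      hh (history_eq_of_eqOn g hv))

theorem condExp_eq_of_forall_integral_mul_eq (hw : ∀ j, 0 < w j) (hp : 0 ≤ p) {k : ℕ}
    {X Z : (Fin n → Fin n → Bool) × (Fin n → Fin n) → ℝ}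
    (hZ : Measurable[explorationFiltration n k] Z)
    (h : ∀ F : (Fin n → Fin n → Bool) × (Fin n → Fin n) → ℝ, F.FactorsThrough (history n k) →
      ∫ ω, F ω * X ω ∂expMeasure' n w p = ∫ ω, F ω * Z ω ∂expMeasure' n w p) :
    (expMeasure' n w p)[X | explorationFiltration n k] =ᵐ[expMeasure' n w p] Z := by
  have := isProbabilityMeasure_expMeasure' hw hp
  refine (ae_eq_condExp_of_forall_setIntegral_eq ((explorationFiltration n).le k) .of_finite
    (fun _ _ _ => Integrable.of_finite.integrableOn) (fun S hS _ => ?_)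
    hZ.aestronglyMeasurable).symm
  have hS0 : MeasurableSet S := (explorationFiltration n).le k S hS
  have indicator_mul (Y : (Fin n → Fin n → Bool) × (Fin n → Fin n) → ℝ) :
      S.indicator Y = fun ω => S.indicator 1 ω * Y ω := by
    ext ω; by_cases hω : ω ∈ S <;> simp [hω]
  rw [← integral_indicator hS0, ← integral_indicator hS0, indicator_mul X, indicator_mul Z]
  exact (h _ (measurable_explorationFiltration_iff.1
    ((measurable_const (a := (1 : ℝ))).indicator hS))).symm

theorem condExp_apply_eq_sizeBiasedMean (hw : ∀ j, 0 < w j) (hp : 0 ≤ p) {k : Fin n}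
    {h : (Fin n → Fin n → Bool) × (Fin n → Fin n) → Fin n → ℝ}
    (hh : h.FactorsThrough (history n k)) :
    (expMeasure' n w p)[fun ω => h ω (ω.2 k) | explorationFiltration n k] =ᵐ[expMeasure' n w p]
      fun ω => sizeBiasedMean w (unexplored ω.2 k) (h ω) := by
  refine condExp_eq_of_forall_integral_mul_eq hw hp
    (measurable_explorationFiltration_iff.2 fun ω ω' hω => ?_) fun F hF => ?_
  · simp only [hh hω, unexplored_eq_of_history_eq hω]
  · rw [integral_apply_eq_integral_sizeBiasedMean hw hp (h := fun ω j => F ω * h ω j)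
      fun ω ω' hω => by simp only [hF hω, hh hω]]
    simp only [sizeBiasedMean_const_mul]

end ExplorationFiltration

noncomputable section DiscoveredNeighbours

variable {n : ℕ} {w : Fin n → ℝ} {p : ℝ}

theorem discNbrs_eq_sum (g : Fin n → Fin n → Bool) (v : Fin n → Fin n) (k : Fin n) :
    (discNbrs (graphOf g) v k : ℝ) =
      ∑ b ∈ unexplored v (k + 1), if edgeIndicator g (v k) b then (1 : ℝ) else 0 := by
  have adj_iff (b : Fin n) (hb : b ∈ unexplored v (k + 1)) :
      (graphOf g).Adj (v k) b ↔ edgeIndicator g (v k) b = true := by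
    have hne : v k ≠ b := mem_unexplored.1 hb k k.1.lt_succ_self
    simp [graphOf, edgeIndicator, hne, min_comm b, max_comm b]
  have subtype_iff (j : Fin n) : ((∃ h : (k : ℕ) < n, (graphOf g).Adj (v ⟨k, h⟩) j) ∧
      ∀ i : ℕ, ∀ hi : i < n, i ≤ k → v ⟨i, hi⟩ ≠ j) ↔
      j ∈ (unexplored v (k + 1)).filter fun b => edgeIndicator g (v k) b = true := by
    have unexplored_iff : j ∈ unexplored v (k + 1) ↔
        ∀ i : ℕ, ∀ hi : i < n, i ≤ k → v ⟨i, hi⟩ ≠ j := by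
      simp only [mem_unexplored, Fin.forall_iff, Nat.lt_succ_iff]
    rw [← unexplored_iff, Finset.mem_filter, and_comm]
    exact and_congr_right fun hj => by rw [← adj_iff j hj]; simp
  rw [← Finset.natCast_card_filter, discNbrs, Nat.card_congr (Equiv.subtypeEquivRight subtype_iff),
    Nat.card_eq_fintype_card, Fintype.card_coe]

theorem discNbrs_of_le (G : SimpleGraph (Fin n)) (v : Fin n → Fin n) {k : ℕ} (hk : n ≤ k) :
    discNbrs G v k = 0 := by
  simp [discNbrs, hk.not_gt]

theorem measurable_discNbrs (k : ℕ) : Measurable[explorationFiltration n (k + 1)]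
    fun ω : (Fin n → Fin n → Bool) × (Fin n → Fin n) => (discNbrs (graphOf ω.1) ω.2 k : ℝ) := by
  refine measurable_explorationFiltration_iff.2 fun ω ω' h => ?_
  rcases lt_or_ge k n with hk | hk
  · lift k to Fin n using hk
    have same_edges : edgeIndicator ω.1 (ω.2 k) = edgeIndicator ω'.1 (ω'.2 k) :=
      congrArg Prod.snd (congrFun h ⟨k, k.1.lt_succ_self⟩)
    simp only [discNbrs_eq_sum, unexplored_eq_of_history_eq h, same_edges]
  · simp only [discNbrs_of_le _ _ hk]

theorem integral_mul_prod_edgeIndicator_apply (hw : ∀ j, 0 < w j) (hp : 0 ≤ p) {k : Fin n}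
    {F : (Fin n → Fin n → Bool) × (Fin n → Fin n) → ℝ} (hF : F.FactorsThrough (history n k))
    {v : Fin n → Fin n} (hv : v.Injective) {B : Finset (Fin n)}
    (hB : B ⊆ (unexplored v k).erase (v k)) (u : Bool → ℝ) :
    ∫ g, F (g, v) * ∏ b ∈ B, u (edgeIndicator g (v k) b) ∂graphMeasure n w p =
      (∫ g, F (g, v) ∂graphMeasure n w p) *
        ∏ b ∈ B, ((1 - edgeProb w p (v k) b) * u false + edgeProb w p (v k) b * u true) := by
  rw [integral_mul_prod_edgeIndicator hw hp fun b hb g x =>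
    hF (history_setEdge (apply_mem_unexplored hv k) (Finset.mem_of_mem_erase (hB hb)) g x)]
  congr 1
  exact Finset.prod_congr rfl fun b _ =>
    integral_bern (edgeProb_nonneg hw hp _ _) (edgeProb_le_one _ _) u

theorem integral_discNbrs (hw : ∀ j, 0 < w j) (hp : 0 ≤ p) (k : Fin n) :
    ∫ ω, (discNbrs (graphOf ω.1) ω.2 k : ℝ) ∂expMeasure' n w p =
      ∫ ω, sizeBiasedMean w (unexplored ω.2 k) (meanNbrs w p (unexplored ω.2 k))
        ∂expMeasure' n w p := by
  have := isProbabilityMeasure_graphMeasure hw hp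
  have edge_mean (σ : Equiv.Perm (Fin n)) (b : Fin n)
      (hb : b ∈ (unexplored σ k).erase (σ k)) :
      ∫ g, (if edgeIndicator g (σ k) b then (1 : ℝ) else 0) ∂graphMeasure n w p =
        edgeProb w p (σ k) b := by
    simpa using integral_mul_prod_edgeIndicator_apply hw hp (F := fun _ => 1) (k := k)
      (fun _ _ _ => rfl) σ.injective (Finset.singleton_subset_iff.2 hb)
      fun x => if x then (1 : ℝ) else 0
  rw [← integral_apply_eq_integral_sizeBiasedMean hw hp fun ω ω' h => by
    rw [unexplored_eq_of_history_eq h], integral_expMeasure' hw hp, integral_expMeasure' hw hp]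
  refine Finset.sum_congr rfl fun σ _ => ?_
  congr 1
  simp only [discNbrs_eq_sum, unexplored_succ]
  rw [integral_finsetSum _ fun _ _ => .of_finite, Finset.sum_congr rfl (edge_mean σ),
    integral_const, probReal_univ, one_smul, meanNbrs]

theorem condExp_exp_discNbrs (hw : ∀ j, 0 < w j) (hp : 0 ≤ p) (k : Fin n) (t : ℝ) :
    (expMeasure' n w p)[fun ω => Real.exp (t * discNbrs (graphOf ω.1) ω.2 k) |
        explorationFiltration n k] =ᵐ[expMeasure' n w p] fun ω =>
      sizeBiasedMean w (unexplored ω.2 k) fun j =>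
        ∏ b ∈ (unexplored ω.2 k).erase j, (1 + edgeProb w p j b * (Real.exp t - 1)) := by
  set Ψ : (Fin n → Fin n → Bool) × (Fin n → Fin n) → Fin n → ℝ := fun ω j =>
    ∏ b ∈ (unexplored ω.2 k).erase j, (1 + edgeProb w p j b * (Real.exp t - 1))
  have determined : Ψ.FactorsThrough (history n k) := fun ω ω' h => by
    simp only [Ψ, unexplored_eq_of_history_eq h]
  have exp_eq_prod (g : Fin n → Fin n → Bool) (v : Fin n → Fin n) :
      Real.exp (t * discNbrs (graphOf g) v k) = ∏ b ∈ (unexplored v k).erase (v k),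
        if edgeIndicator g (v k) b then Real.exp t else 1 := by
    rw [discNbrs_eq_sum, unexplored_succ, Finset.mul_sum, Real.exp_sum]
    exact Finset.prod_congr rfl fun b _ => by split <;> simp
  refine condExp_eq_of_forall_integral_mul_eq hw hp
    (measurable_explorationFiltration_iff.2 fun ω ω' h => ?_) fun F hF => ?_
  · change sizeBiasedMean w _ (Ψ ω) = sizeBiasedMean w _ (Ψ ω')
    rw [determined h, unexplored_eq_of_history_eq h]
  · calc _ = ∫ ω, F ω * Ψ ω (ω.2 k) ∂expMeasure' n w p := by
          rw [integral_expMeasure' hw hp, integral_expMeasure' hw hp]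
          refine Finset.sum_congr rfl fun σ _ => ?_
          congr 1
          simp only [exp_eq_prod, Ψ]
          rw [integral_mul_prod_edgeIndicator_apply hw hp hF σ.injective subset_rfl
            fun x => if x then Real.exp t else 1, ← integral_mul_const]
          refine integral_congr_ae (.of_forall fun g => ?_)
          simp only [Bool.false_eq_true, if_false, if_true]
          congr 1
          exact Finset.prod_congr rfl fun b _ => by ring
      _ = _ := by
          rw [integral_apply_eq_integral_sizeBiasedMean hw hp (h := fun ω j => F ω * Ψ ω j)
            fun ω ω' h => by simp only [hF h, determined h]]
          simp only [sizeBiasedMean_const_mul, Ψ]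

theorem condExp_exp_discNbrs_le (hw : ∀ j, 0 < w j) (hp : 0 ≤ p) (k : Fin n) (t : ℝ) :
    (expMeasure' n w p)[fun ω => Real.exp (t * discNbrs (graphOf ω.1) ω.2 k) |
        explorationFiltration n k] ≤ᵐ[expMeasure' n w p] fun ω =>
      sizeBiasedMean w (unexplored ω.2 k) fun j =>
        Real.exp ((Real.exp t - 1) * meanNbrs w p (unexplored ω.2 k) j) := by
  filter_upwards [condExp_exp_discNbrs hw hp k t] with ω hω
  rw [hω]
  refine sizeBiasedMean_mono (fun j _ => (hw j).le) fun j _ => ?_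
  rw [meanNbrs, Finset.mul_sum, Real.exp_sum]
  refine Finset.prod_le_prod (fun b _ => ?_) fun b _ => ?_
  · have h0 := edgeProb_nonneg hw hp j b
    have h1 := edgeProb_le_one (w := w) (p := p) j b
    nlinarith [Real.exp_pos t]
  · rw [mul_comm (Real.exp t - 1), add_comm]
    exact Real.add_one_le_exp _

end DiscoveredNeighbours

noncomputable section MomentBounds

variable {ι : Type*} [Fintype ι] {w : ι → ℝ} {p C : ℝ} {T : Finset ι}

/-- The moment bounds satisfied by the weights `w` and the parameter `p` of a near-critical random
graph: the second and third moments of `w` are comparable with its total mass, and the mean number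
of neighbours of a vertex `j` is at most `2 * w j`. -/
structure MomentBounds (w : ι → ℝ) (p C : ℝ) : Prop where
  weight_pos : ∀ j, 0 < w j
  sum_pos : 0 < ∑ j, w j
  param_pos : 0 < p
  param_mul_sum_le : p * ∑ j, w j ≤ 2
  one_le : 1 ≤ C
  sum_sq_le : ∑ j, w j ^ 2 ≤ C * ∑ j, w j
  sum_cube_le : ∑ j, w j ^ 3 ≤ C * ∑ j, w j

namespace MomentBounds

theorem const_pos (hb : MomentBounds w p C) : 0 < C := one_pos.trans_le hb.one_le

theorem sizeBiasedMean_le (hb : MomentBounds w p C) (hT : ∑ j, w j ≤ 2 * ∑ j ∈ T, w j)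
    {h : ι → ℝ} {B : ℝ} (hh : ∀ j, 0 ≤ h j) (hB : ∑ j, w j * h j ≤ B * ∑ j, w j) :
    sizeBiasedMean w T h ≤ 2 * B :=
  sizeBiasedMean_le_two_mul (fun j => (hb.weight_pos j).le) hb.sum_pos hT hh hB

theorem sum_pos_of_le (hb : MomentBounds w p C) (hT : ∑ j, w j ≤ 2 * ∑ j ∈ T, w j) :
    0 < ∑ j ∈ T, w j := by
  linarith [hb.sum_pos]

variable [DecidableEq ι]

theorem meanNbrs_le_two_mul (hb : MomentBounds w p C) (T : Finset ι) (j : ι) :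
    meanNbrs w p T j ≤ 2 * w j := by
  have hw := hb.weight_pos j
  calc meanNbrs w p T j ≤ w j * p * ∑ b ∈ T, w b :=
        meanNbrs_le hb.weight_pos hb.param_pos.le T j
    _ ≤ w j * p * ∑ b, w b :=
        mul_le_mul_of_nonneg_left (Finset.sum_le_univ_sum_of_nonneg fun b => (hb.weight_pos b).le)
          (mul_pos hw hb.param_pos).le
    _ ≤ 2 * w j := by nlinarith [hb.param_mul_sum_le]

theorem sizeBiasedMean_meanNbrs_le (hb : MomentBounds w p C)
    (hT : ∑ j, w j ≤ 2 * ∑ j ∈ T, w j) :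
    sizeBiasedMean w T (meanNbrs w p T) ≤ 4 * C := by
  refine (hb.sizeBiasedMean_le hT (meanNbrs_nonneg hb.weight_pos hb.param_pos.le T)
    (B := 2 * C) ?_).trans_eq (by ring)
  calc ∑ j, w j * meanNbrs w p T j ≤ ∑ j, 2 * w j ^ 2 :=
        Finset.sum_le_sum fun j _ => by nlinarith [hb.weight_pos j, hb.meanNbrs_le_two_mul T j]
    _ ≤ 2 * C * ∑ j, w j := by
        rw [← Finset.mul_sum]
        linarith [hb.sum_sq_le]

theorem sizeBiasedMean_meanNbrs_sq_le (hb : MomentBounds w p C)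
    (hT : ∑ j, w j ≤ 2 * ∑ j ∈ T, w j) :
    sizeBiasedMean w T (fun j => meanNbrs w p T j ^ 2) ≤ 8 * C := by
  refine (hb.sizeBiasedMean_le hT (fun j => sq_nonneg _) (B := 4 * C) ?_).trans_eq (by ring)
  calc ∑ j, w j * meanNbrs w p T j ^ 2 ≤ ∑ j, w j * (2 * w j) ^ 2 :=
        Finset.sum_le_sum fun j _ => mul_le_mul_of_nonneg_left (pow_le_pow_left₀
          (meanNbrs_nonneg hb.weight_pos hb.param_pos.le T j) (hb.meanNbrs_le_two_mul T j) 2)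
          (hb.weight_pos j).le
    _ = 4 * ∑ j, w j ^ 3 := by
        rw [Finset.mul_sum]
        exact Finset.sum_congr rfl fun j _ => by ring
    _ ≤ 4 * C * ∑ j, w j := by linarith [hb.sum_cube_le]

theorem sizeBiasedMean_exp_meanNbrs_le {β t : ℝ} (hb : MomentBounds w p C)
    (hT : ∑ j, w j ≤ 2 * ∑ j ∈ T, w j) (hβ : ∀ j, w j ≤ β) (ht : |t| ≤ 1)
    (htβ : 4 * |t| * β ≤ 1) :
    sizeBiasedMean w T (fun j => Real.exp ((Real.exp t - 1) * meanNbrs w p T j)) ≤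
      Real.exp (t * sizeBiasedMean w T (meanNbrs w p T) + 36 * C * t ^ 2) := by
  have hw0 (j : ι) := (hb.weight_pos j).le
  have nbrs_nonneg := meanNbrs_nonneg hb.weight_pos hb.param_pos.le T
  have abs_sub_one_le := Real.abs_exp_sub_one_le ht
  have le_add_sq : Real.exp t - 1 ≤ t + t ^ 2 := by
    linarith [(abs_le.1 (Real.abs_exp_sub_one_sub_id_le ht)).2]
  have sq_le : (Real.exp t - 1) ^ 2 ≤ 4 * t ^ 2 := by
    rw [← sq_abs, ← sq_abs t]
    nlinarith [abs_nonneg (Real.exp t - 1)]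
  have small (j : ι) : |(Real.exp t - 1) * meanNbrs w p T j| ≤ 1 := by
    rw [abs_mul, abs_of_nonneg (nbrs_nonneg j)]
    calc |Real.exp t - 1| * meanNbrs w p T j ≤ 2 * |t| * (2 * β) := by
          gcongr
          exacts [nbrs_nonneg j, (hb.meanNbrs_le_two_mul T j).trans (by linarith [hβ j])]
      _ ≤ 1 := by linarith
  refine (sizeBiasedMean_exp_le (fun j _ => hw0 j) (hb.sum_pos_of_le hT) (fun j _ => small j)
    (hb.sizeBiasedMean_meanNbrs_sq_le hT)).trans (Real.exp_le_exp.2 ?_)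
  have mean_le := hb.sizeBiasedMean_meanNbrs_le hT
  have mean_nonneg : 0 ≤ sizeBiasedMean w T (meanNbrs w p T) :=
    sizeBiasedMean_nonneg (fun j _ => hw0 j) fun j _ => nbrs_nonneg j
  nlinarith [hb.const_pos, sq_nonneg t]

theorem abs_sizeBiasedMean_meanNbrs_sub_le (hb : MomentBounds w p C)
    (hT : ∑ j, w j ≤ 2 * ∑ j ∈ T, w j) :
    |sizeBiasedMean w T (meanNbrs w p T) - p * ∑ j ∈ T, w j ^ 2| ≤ 12 * C ^ 2 / ∑ j, w j := by
  have hw := hb.weight_pos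
  have hp := hb.param_pos.le
  have hC := hb.const_pos
  have hL := hb.sum_pos
  have sum_T_pos := hb.sum_pos_of_le hT
  have sq_mean : p * ∑ j ∈ T, w j ^ 2 =
      sizeBiasedMean w T fun j => w j * p * ∑ b ∈ T, w b := by
    rw [sizeBiasedMean, eq_div_iff sum_T_pos.ne', mul_right_comm, Finset.mul_sum]
    exact Finset.sum_congr rfl fun j _ => by ring
  set e := fun j => w j ^ 2 * p + w j ^ 2 * p ^ 2 * ∑ b ∈ T, w b ^ 2
  have upper : sizeBiasedMean w T (meanNbrs w p T) ≤ p * ∑ j ∈ T, w j ^ 2 :=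
    sq_mean ▸ sizeBiasedMean_mono (fun j _ => (hw j).le) fun j _ => meanNbrs_le hw hp T j
  have lower : p * ∑ j ∈ T, w j ^ 2 ≤
      sizeBiasedMean w T (meanNbrs w p T) + sizeBiasedMean w T e := by
    rw [sq_mean, ← sizeBiasedMean_add]
    exact sizeBiasedMean_mono (fun j _ => (hw j).le) fun j _ => le_meanNbrs_add hw hp T j
  have coefficient_le : p + p ^ 2 * ∑ b ∈ T, w b ^ 2 ≤ 6 * C / ∑ j, w j := by
    have hpL := hb.param_mul_sum_le
    have sum_sq_le : ∑ b ∈ T, w b ^ 2 ≤ C * ∑ j, w j :=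
      (Finset.sum_le_univ_sum_of_nonneg fun b => sq_nonneg (w b)).trans hb.sum_sq_le
    rw [le_div_iff₀ hL]
    calc (p + p ^ 2 * ∑ b ∈ T, w b ^ 2) * ∑ j, w j
        ≤ (p + p ^ 2 * (C * ∑ j, w j)) * ∑ j, w j := by gcongr
      _ = p * (∑ j, w j) + C * (p * ∑ j, w j) ^ 2 := by ring
      _ ≤ 2 + C * 2 ^ 2 := by gcongr
      _ ≤ 6 * C := by linarith [hb.one_le]
  have error_le : sizeBiasedMean w T e ≤ 2 * (6 * C ^ 2 / ∑ j, w j) := by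
    refine hb.sizeBiasedMean_le hT (fun j => by positivity) ?_
    calc ∑ j, w j * e j = (p + p ^ 2 * ∑ b ∈ T, w b ^ 2) * ∑ j, w j ^ 3 := by
          rw [Finset.mul_sum]
          exact Finset.sum_congr rfl fun j _ => by ring
      _ ≤ 6 * C / (∑ j, w j) * (C * ∑ j, w j) :=
          mul_le_mul coefficient_le hb.sum_cube_le
            (Finset.sum_nonneg fun j _ => (pow_pos (hw j) 3).le) (by positivity)
      _ = 6 * C ^ 2 / (∑ j, w j) * ∑ j, w j := by ring
  rw [abs_sub_comm, abs_of_nonneg (sub_nonneg.2 upper)]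
  calc _ ≤ sizeBiasedMean w T e := sub_le_iff_le_add'.2 lower
    _ ≤ 2 * (6 * C ^ 2 / ∑ j, w j) := error_le
    _ = 12 * C ^ 2 / ∑ j, w j := by ring

end MomentBounds

end MomentBounds

noncomputable section TruncatedSquares

variable {ι : Type*} {w : ι → ℝ} {p C a η : ℝ} {T : Finset ι}

/-- The square of the weight of `j`, replaced by `0` when this weight exceeds the level `a`. -/
def truncatedSq (w : ι → ℝ) (a : ℝ) (j : ι) : ℝ := if w j ≤ a then w j ^ 2 else 0

theorem truncatedSq_nonneg (j : ι) : 0 ≤ truncatedSq w a j := by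
  rw [truncatedSq]
  split_ifs <;> positivity

theorem truncatedSq_le_sq (j : ι) : truncatedSq w a j ≤ w j ^ 2 := by
  rw [truncatedSq]
  split_ifs
  exacts [le_rfl, sq_nonneg _]

theorem truncatedSq_le_mul {β : ℝ} {j : ι} (hw : 0 ≤ w j) (ha : 0 ≤ a) (hβ : w j ≤ β) :
    truncatedSq w a j ≤ a * β := by
  rw [truncatedSq, sq]
  split_ifs with h
  exacts [mul_le_mul h hβ hw ha, mul_nonneg ha (hw.trans hβ)]

theorem sq_sub_truncatedSq_le {j : ι} (hw : 0 ≤ w j) (ha : 0 < a) :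
    w j ^ 2 - truncatedSq w a j ≤ w j ^ 3 / a := by
  rw [truncatedSq, le_div_iff₀ ha]
  split_ifs with h
  · simpa using pow_nonneg hw 3
  · nlinarith [sq_nonneg (w j)]

variable [Fintype ι]

namespace MomentBounds

theorem sum_mul_truncatedSq_le (hb : MomentBounds w p C) :
    ∑ j, w j * truncatedSq w a j ≤ C * ∑ j, w j :=
  (Finset.sum_le_sum fun j _ => (mul_le_mul_of_nonneg_left (truncatedSq_le_sq j)
    (hb.weight_pos j).le).trans_eq (pow_succ' _ _).symm).trans hb.sum_cube_le

theorem sizeBiasedMean_exp_truncatedSq_le {β t : ℝ} (hb : MomentBounds w p C)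
    (hT : ∑ j, w j ≤ 2 * ∑ j ∈ T, w j) (ha : 0 ≤ a) (hβ : ∀ j, w j ≤ β)
    (htβ : |t| * (a * β) ≤ 1) :
    sizeBiasedMean w T (fun j => Real.exp (t * truncatedSq w a j)) ≤
      Real.exp (t * sizeBiasedMean w T (truncatedSq w a) + 2 * C * (a * β) * t ^ 2) := by
  have hw (j : ι) := (hb.weight_pos j).le
  have le_mul (j : ι) : truncatedSq w a j ≤ a * β := truncatedSq_le_mul (hw j) ha (hβ j)
  have small (j : ι) : |t * truncatedSq w a j| ≤ 1 := by
    rw [abs_mul, abs_of_nonneg (truncatedSq_nonneg j)]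
    exact (mul_le_mul_of_nonneg_left (le_mul j) (abs_nonneg t)).trans htβ
  have second_moment_le :
      sizeBiasedMean w T (fun j => truncatedSq w a j ^ 2) ≤ 2 * (a * β * C) := by
    obtain ⟨j₀, -⟩ := Finset.nonempty_of_sum_ne_zero hb.sum_pos.ne'
    refine hb.sizeBiasedMean_le hT (fun j => sq_nonneg _) ?_
    calc ∑ j, w j * truncatedSq w a j ^ 2 ≤ ∑ j, a * β * (w j * truncatedSq w a j) :=
          Finset.sum_le_sum fun j _ => by
            nlinarith [mul_le_mul_of_nonneg_right (le_mul j)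
              (mul_nonneg (hw j) (truncatedSq_nonneg (w := w) (a := a) j))]
      _ ≤ a * β * C * ∑ j, w j := by
          rw [← Finset.mul_sum, mul_assoc _ C]
          exact mul_le_mul_of_nonneg_left hb.sum_mul_truncatedSq_le
            ((truncatedSq_nonneg _).trans (le_mul j₀))
  refine (sizeBiasedMean_exp_le (fun j _ => hw j) (hb.sum_pos_of_le hT) (fun j _ => small j)
    second_moment_le).trans_eq ?_
  ring_nf

theorem abs_sizeBiasedMean_truncatedSq_sub_le [DecidableEq ι] (hb : MomentBounds w p C)
    (hη : η ≤ 1 / 2) (hT : ∑ j ∈ Tᶜ, w j ≤ η * ∑ j, w j)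
    (hT3 : ∑ j ∈ Tᶜ, w j ^ 3 ≤ η * ∑ j, w j) :
    |sizeBiasedMean w T (truncatedSq w a) - sizeBiasedMean w Finset.univ (truncatedSq w a)| ≤
      2 * C * η := by
  have hw (j : ι) := (hb.weight_pos j).le
  have compl_nonneg : 0 ≤ η * ∑ j, w j := (Finset.sum_nonneg fun j _ => hw j).trans hT
  refine abs_sizeBiasedMean_sub_univ_le hw hb.sum_pos truncatedSq_nonneg hη hT
    hb.sum_mul_truncatedSq_le ?_
  calc ∑ j ∈ Tᶜ, w j * truncatedSq w a j ≤ ∑ j ∈ Tᶜ, w j ^ 3 :=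
        Finset.sum_le_sum fun j _ => (mul_le_mul_of_nonneg_left (truncatedSq_le_sq j)
          (hw j)).trans_eq (pow_succ' _ _).symm
    _ ≤ η * ∑ j, w j := hT3
    _ ≤ C * η * ∑ j, w j := by nlinarith [hb.one_le]

theorem sum_sq_sub_truncatedSq_le (hb : MomentBounds w p C) (ha : 0 < a)
    (S : Finset ι) : ∑ j ∈ S, (w j ^ 2 - truncatedSq w a j) ≤ C * (∑ j, w j) / a := by
  calc ∑ j ∈ S, (w j ^ 2 - truncatedSq w a j) ≤ ∑ j, (w j ^ 2 - truncatedSq w a j) :=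
        Finset.sum_le_univ_sum_of_nonneg fun j => sub_nonneg.2 (truncatedSq_le_sq j)
    _ ≤ ∑ j, w j ^ 3 / a :=
        Finset.sum_le_sum fun j _ => sq_sub_truncatedSq_le (hb.weight_pos j).le ha
    _ ≤ C * (∑ j, w j) / a := by
        rw [← Finset.sum_div]
        exact div_le_div_of_nonneg_right hb.sum_cube_le ha.le

end MomentBounds

end TruncatedSquares

noncomputable section Compensators

variable {n m : ℕ} {w : Fin n → ℝ} {p a C η : ℝ}

/-- The weights are spread out at scale `m`: any `m` vertices carry at most a fraction `η` of the
total weight, and their third moment is small as well. -/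
def SpreadWeights (w : Fin n → ℝ) (m : ℕ) (η : ℝ) : Prop :=
  ∀ S : Finset (Fin n), S.card ≤ m →
    ∑ j ∈ S, w j ≤ η * ∑ j, w j ∧ ∑ j ∈ S, w j ^ 3 ≤ η * ∑ j, w j

theorem SpreadWeights.sum_le_two_mul_sum_unexplored (hs : SpreadWeights w m η) (hη : η ≤ 1 / 2)
    (hL : 0 < ∑ j, w j) {k : ℕ} (hk : k ≤ m) (v : Fin n → Fin n) :
    ∑ j, w j ≤ 2 * ∑ j ∈ unexplored v k, w j := by
  have split := Finset.sum_add_sum_compl (unexplored v k) w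
  have compl_le := (hs _ ((card_compl_unexplored_le v k).trans hk)).1
  nlinarith

/-- The conditional mean, given the first `i` steps, of the number of neighbours discovered by the
next step of the exploration in the order `v`. -/
def nbrsDrift (w : Fin n → ℝ) (p : ℝ) (v : Fin n → Fin n) (i : ℕ) : ℝ :=
  sizeBiasedMean w (unexplored v i) (meanNbrs w p (unexplored v i))

/-- The conditional mean, given the first `i` steps, of the truncated squared weight of the next
vertex explored in the order `v`. -/
def sqDrift (w : Fin n → ℝ) (a : ℝ) (v : Fin n → Fin n) (i : ℕ) : ℝ :=
  sizeBiasedMean w (unexplored v i) (truncatedSq w a)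

/-- The sum of the truncated squared weights of the first `k` vertices explored in the order `v`. -/
def exploredSq (w : Fin n → ℝ) (a : ℝ) (v : Fin n → Fin n) (k : ℕ) : ℝ :=
  ∑ j ∈ (unexplored v k)ᶜ, truncatedSq w a j

/-- The martingale part of `exploredSq`. -/
def compensatedSq (w : Fin n → ℝ) (a : ℝ) (v : Fin n → Fin n) (k : ℕ) : ℝ :=
  exploredSq w a v k - ∑ i ∈ Finset.range k, sqDrift w a v i

theorem exploredSq_zero (v : Fin n → Fin n) : exploredSq w a v 0 = 0 := by
  rw [exploredSq, unexplored_zero, Finset.compl_univ, Finset.sum_empty]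

theorem exploredSq_succ {v : Fin n → Fin n} (hv : v.Injective) (k : Fin n) :
    exploredSq w a v (k + 1) = exploredSq w a v k + truncatedSq w a (v k) := by
  rw [exploredSq, unexplored_succ, Finset.compl_erase, Finset.sum_insert, add_comm, exploredSq]
  simpa using apply_mem_unexplored hv k

theorem compensatedSq_eq_sum (v : Fin n → Fin n) (k : ℕ) : compensatedSq w a v k =
    ∑ i ∈ Finset.Ico 0 k, (exploredSq w a v (i + 1) - exploredSq w a v i - sqDrift w a v i) := by
  rw [← Finset.range_eq_Ico, Finset.sum_sub_distrib, Finset.sum_range_sub, exploredSq_zero,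
    sub_zero, compensatedSq]

theorem integral_compensatedSq (hw : ∀ j, 0 < w j) (hp : 0 ≤ p) {k : ℕ} (hk : k ≤ n) :
    ∫ ω, compensatedSq w a ω.2 k ∂expMeasure' n w p = 0 := by
  have := isProbabilityMeasure_expMeasure' hw hp
  simp only [compensatedSq_eq_sum]
  rw [integral_finsetSum _ fun _ _ => .of_finite]
  refine Finset.sum_eq_zero fun i hi => ?_
  lift i to Fin n using (Finset.mem_Ico.1 hi).2.trans_le hk
  have step : (fun ω : (Fin n → Fin n → Bool) × (Fin n → Fin n) =>
      exploredSq w a ω.2 (i + 1) - exploredSq w a ω.2 i - sqDrift w a ω.2 i)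
      =ᵐ[expMeasure' n w p] fun ω => truncatedSq w a (ω.2 i) - sqDrift w a ω.2 i := by
    filter_upwards [ae_injective_expMeasure'] with ω hω
    rw [exploredSq_succ hω, add_sub_cancel_left]
  rw [integral_congr_ae step, integral_sub .of_finite .of_finite,
    integral_apply_eq_integral_sizeBiasedMean (h := fun _ => truncatedSq w a) hw hp
      fun _ _ _ => rfl]
  exact sub_self _

namespace MomentBounds

theorem abs_sum_sqDrift_sub_le (hb : MomentBounds w p C) (hs : SpreadWeights w m η) (hη0 : 0 ≤ η)
    (hη : η ≤ 1 / 2) {i : ℕ} (hi : i ≤ m) (v : Fin n → Fin n) :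
    |∑ k ∈ Finset.range i, (sqDrift w a v k - sizeBiasedMean w Finset.univ (truncatedSq w a))| ≤
      2 * C * η * m := by
  have hC := hb.const_pos
  refine (Finset.abs_sum_le_sum_abs _ _).trans ((Finset.sum_le_card_nsmul _ _ (2 * C * η)
    fun k hk => ?_).trans ?_)
  · obtain ⟨hT, hT3⟩ := hs _ ((card_compl_unexplored_le v k).trans
      ((Finset.mem_range.1 hk).le.trans hi))
    exact hb.abs_sizeBiasedMean_truncatedSq_sub_le hη hT hT3
  · rw [Finset.card_range, nsmul_eq_mul, mul_comm]
    gcongr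

/-- Only the squared weights of the explored vertices make `nbrsDrift` random, and the fluctuations
of their sum are those of `compensatedSq`. -/
theorem abs_nbrsDrift_sub_le (hb : MomentBounds w p C) (ha : 0 < a) (hs : SpreadWeights w m η)
    (hη0 : 0 ≤ η) (hη : η ≤ 1 / 2) {i : ℕ} (hi : i ≤ m) (v : Fin n → Fin n) :
    |nbrsDrift w p v i -
        (p * (∑ j, w j ^ 2 - i * sizeBiasedMean w Finset.univ (truncatedSq w a)) -
          p * compensatedSq w a v i)| ≤
      12 * C ^ 2 / (∑ j, w j) + p * (C * (∑ j, w j) / a + 2 * C * η * m) := by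
  set c := sizeBiasedMean w Finset.univ (truncatedSq w a)
  set T := unexplored v i
  have mean_near := hb.abs_sizeBiasedMean_meanNbrs_sub_le
    (hs.sum_le_two_mul_sum_unexplored hη hb.sum_pos hi v)
  have explored_le := hb.sum_sq_sub_truncatedSq_le ha Tᶜ
  have explored_nonneg : 0 ≤ ∑ j ∈ Tᶜ, (w j ^ 2 - truncatedSq w a j) :=
    Finset.sum_nonneg fun j _ => sub_nonneg.2 (truncatedSq_le_sq j)
  have drift_near := hb.abs_sum_sqDrift_sub_le (a := a) hs hη0 hη hi v
  have decomposition : nbrsDrift w p v i - (p * (∑ j, w j ^ 2 - i * c) - p * compensatedSq w a v i)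
      = (nbrsDrift w p v i - p * ∑ j ∈ T, w j ^ 2) +
        p * (-∑ j ∈ Tᶜ, (w j ^ 2 - truncatedSq w a j) -
          ∑ k ∈ Finset.range i, (sqDrift w a v k - c)) := by
    rw [← Finset.sum_add_sum_compl T, compensatedSq, exploredSq, Finset.sum_sub_distrib,
      Finset.sum_sub_distrib, Finset.sum_const, Finset.card_range, nsmul_eq_mul]
    ring
  rw [decomposition]
  refine (abs_add_le _ _).trans (add_le_add mean_near ?_)
  rw [abs_mul, abs_of_pos hb.param_pos]
  refine mul_le_mul_of_nonneg_left (abs_le.2 ?_) hb.param_pos.le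
  constructor <;> linarith [(abs_le.1 drift_near).1, (abs_le.1 drift_near).2]

theorem abs_integral_discNbrs_sub_le (hb : MomentBounds w p C) (ha : 0 < a)
    (hs : SpreadWeights w m η) (hη0 : 0 ≤ η) (hη : η ≤ 1 / 2) {i : ℕ} (hi : i ≤ m) (hin : i < n) :
    |∫ ω, (discNbrs (graphOf ω.1) ω.2 i : ℝ) ∂expMeasure' n w p -
        p * (∑ j, w j ^ 2 - i * sizeBiasedMean w Finset.univ (truncatedSq w a))| ≤
      12 * C ^ 2 / (∑ j, w j) + p * (C * (∑ j, w j) / a + 2 * C * η * m) := by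
  have hp := hb.param_pos.le
  have := isProbabilityMeasure_expMeasure' hb.weight_pos hp
  lift i to Fin n using hin
  set e := 12 * C ^ 2 / (∑ j, w j) + p * (C * (∑ j, w j) / a + 2 * C * η * m)
  set drift := p * (∑ j, w j ^ 2 - (i : ℕ) * sizeBiasedMean w Finset.univ (truncatedSq w a))
  have mean_eq : ∫ ω, (discNbrs (graphOf ω.1) ω.2 i : ℝ) ∂expMeasure' n w p - drift =
      ∫ ω, (nbrsDrift w p ω.2 i - (drift - p * compensatedSq w a ω.2 i)) ∂expMeasure' n w p := by
    rw [integral_sub .of_finite .of_finite, integral_sub .of_finite .of_finite,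
      integral_const_mul p fun ω : (Fin n → Fin n → Bool) × (Fin n → Fin n) =>
        compensatedSq w a ω.2 i, integral_compensatedSq hb.weight_pos hp i.2.le, integral_const,
      probReal_univ, one_smul, mul_zero, sub_zero, integral_discNbrs hb.weight_pos hp]
    rfl
  rw [mean_eq, ← Real.norm_eq_abs]
  refine (norm_integral_le_of_norm_le_const (C := e) (.of_forall fun ω =>
    hb.abs_nbrsDrift_sub_le ha hs hη0 hη hi ω.2)).trans_eq ?_
  rw [probReal_univ, mul_one]

end MomentBounds

end Compensators

noncomputable section MartingaleConcentration

variable {n l m : ℕ} {w : Fin n → ℝ} {p a β t C η : ℝ}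

namespace MomentBounds

theorem condExp_exp_discNbrs_le_exp (hb : MomentBounds w p C) {k : Fin n}
    (hT : ∀ v, ∑ j, w j ≤ 2 * ∑ j ∈ unexplored v k, w j) (hβ : ∀ j, w j ≤ β) (ht : |t| ≤ 1)
    (htβ : 4 * |t| * β ≤ 1) :
    (expMeasure' n w p)[fun ω => Real.exp (t * discNbrs (graphOf ω.1) ω.2 k) |
        explorationFiltration n k] ≤ᵐ[expMeasure' n w p] fun ω =>
      Real.exp (t * nbrsDrift w p ω.2 k + 36 * C * t ^ 2) := by
  filter_upwards [condExp_exp_discNbrs_le hb.weight_pos hb.param_pos.le k t] with ω hω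
  exact hω.trans (hb.sizeBiasedMean_exp_meanNbrs_le (hT ω.2) hβ ht htβ)

theorem condExp_exp_exploredSq_le_exp (hb : MomentBounds w p C) {k : Fin n}
    (hT : ∀ v, ∑ j, w j ≤ 2 * ∑ j ∈ unexplored v k, w j) (ha : 0 ≤ a) (hβ : ∀ j, w j ≤ β)
    (htβ : |t| * (a * β) ≤ 1) :
    (expMeasure' n w p)[fun ω =>
          Real.exp (t * (exploredSq w a ω.2 (k + 1) - exploredSq w a ω.2 k)) |
        explorationFiltration n k] ≤ᵐ[expMeasure' n w p] fun ω =>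
      Real.exp (t * sqDrift w a ω.2 k + 2 * C * (a * β) * t ^ 2) := by
  have step : (fun ω : (Fin n → Fin n → Bool) × (Fin n → Fin n) =>
      Real.exp (t * (exploredSq w a ω.2 (k + 1) - exploredSq w a ω.2 k)))
      =ᵐ[expMeasure' n w p] fun ω => Real.exp (t * truncatedSq w a (ω.2 k)) := by
    filter_upwards [ae_injective_expMeasure'] with ω hω
    rw [exploredSq_succ hω, add_sub_cancel_left]
  filter_upwards [condExp_congr_ae (m := explorationFiltration n k) step,
    condExp_apply_eq_sizeBiasedMean hb.weight_pos hb.param_pos.le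
      (h := fun _ j => Real.exp (t * truncatedSq w a j)) (k := k) fun _ _ _ => rfl] with ω hω hω'
  rw [hω, hω']
  exact hb.sizeBiasedMean_exp_truncatedSq_le (hT ω.2) ha hβ htβ

theorem measureReal_exists_le_abs_sum_discNbrs_sub_le (hb : MomentBounds w p C)
    (hs : SpreadWeights w m η) (hη : η ≤ 1 / 2) (hmn : m ≤ n) (hβ : ∀ j, w j ≤ β)
    (ht0 : 0 ≤ t) (ht : t ≤ 1) (htβ : 4 * t * β ≤ 1) (x : ℝ) :
    (expMeasure' n w p).real {ω | ∃ k ∈ Finset.Icc l m,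
        x ≤ |∑ i ∈ Finset.Ico l k, ((discNbrs (graphOf ω.1) ω.2 i : ℝ) - nbrsDrift w p ω.2 i)|} ≤
      2 * Real.exp (36 * C * t ^ 2 * (m - l) - t * x) := by
  have := isProbabilityMeasure_expMeasure' hb.weight_pos hb.param_pos.le
  have hC := hb.const_pos
  refine measureReal_exists_le_abs_sum_sub_le (ℱ := explorationFiltration n) measurable_discNbrs
    (fun i => measurable_unexplored i fun T => sizeBiasedMean w T (meanNbrs w p T))
    (fun _ _ => .of_finite) (fun _ _ => .of_finite) (fun θ hθ i _ him => ?_) (by positivity) ht0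
  lift i to Fin n using him.trans_le hmn
  subst hθ
  rw [sq_abs]
  exact hb.condExp_exp_discNbrs_le_exp
    (hs.sum_le_two_mul_sum_unexplored hη hb.sum_pos him.le) hβ ht htβ

theorem measureReal_exists_le_abs_compensatedSq_le (hb : MomentBounds w p C)
    (hs : SpreadWeights w m η) (hη : η ≤ 1 / 2) (hmn : m ≤ n) (ha : 0 ≤ a) (hβ0 : 0 ≤ β)
    (hβ : ∀ j, w j ≤ β) (ht0 : 0 ≤ t) (htβ : t * (a * β) ≤ 1) (x : ℝ) :
    (expMeasure' n w p).real {ω | ∃ k ≤ m, x ≤ |compensatedSq w a ω.2 k|} ≤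
      2 * Real.exp (2 * C * (a * β) * t ^ 2 * m - t * x) := by
  have := isProbabilityMeasure_expMeasure' hb.weight_pos hb.param_pos.le
  have hC := hb.const_pos
  have maximal := measureReal_exists_le_abs_sum_sub_le (P := expMeasure' n w p)
    (ℱ := explorationFiltration n) (l := 0) (m := m) (t := t) (x := x)
    (c := 2 * C * (a * β) * t ^ 2)
    (X := fun i ω => exploredSq w a ω.2 (i + 1) - exploredSq w a ω.2 i)
    (A := fun i ω => sqDrift w a ω.2 i)
    (fun i => (measurable_unexplored (i + 1) fun T => ∑ j ∈ Tᶜ, truncatedSq w a j).sub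
      ((measurable_unexplored i fun T => ∑ j ∈ Tᶜ, truncatedSq w a j).mono
        ((explorationFiltration n).mono i.le_succ) le_rfl))
    (fun i => measurable_unexplored i fun T => sizeBiasedMean w T (truncatedSq w a))
    (fun _ _ => .of_finite) (fun _ _ => .of_finite) (fun θ hθ i _ him => ?_) (by positivity) ht0
  · simpa only [← compensatedSq_eq_sum, Finset.mem_Icc, Nat.zero_le, true_and, Nat.cast_zero,
      sub_zero] using maximal
  · lift i to Fin n using him.trans_le hmn
    subst hθ
    rw [sq_abs]
    exact hb.condExp_exp_exploredSq_le_exp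
      (hs.sum_le_two_mul_sum_unexplored hη hb.sum_pos him.le) ha hβ htβ

end MomentBounds

end MartingaleConcentration

section Increments

variable {n l m : ℕ} {w : Fin n → ℝ} {p C : ℝ}

theorem L0_sub_L0 (G : SimpleGraph (Fin n)) (v : Fin n → Fin n) {i j : ℕ} (hij : i ≤ j) :
    (L0 G v j : ℝ) - L0 G v i = ∑ k ∈ Finset.Ico i j, (discNbrs G v k : ℝ) - (j - i) := by
  rw [Finset.sum_Ico_eq_sub _ hij]
  simp only [L0]
  push_cast
  ring

theorem L0_sub_L0_sub_integral (hw : ∀ j, 0 < w j) (hp : 0 ≤ p)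
    (ω : (Fin n → Fin n → Bool) × (Fin n → Fin n)) {i j : ℕ} (hij : i ≤ j) :
    (L0 (graphOf ω.1) ω.2 j : ℝ) - L0 (graphOf ω.1) ω.2 i -
        ∫ ω', ((L0 (graphOf ω'.1) ω'.2 j : ℝ) - L0 (graphOf ω'.1) ω'.2 i) ∂expMeasure' n w p =
      ∑ k ∈ Finset.Ico i j, ((discNbrs (graphOf ω.1) ω.2 k : ℝ) -
        ∫ ω', (discNbrs (graphOf ω'.1) ω'.2 k : ℝ) ∂expMeasure' n w p) := by
  have := isProbabilityMeasure_expMeasure' hw hp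
  simp only [L0_sub_L0 _ _ hij]
  rw [integral_sub .of_finite .of_finite, integral_const, probReal_univ, one_smul,
    integral_finsetSum _ fun _ _ => .of_finite, Finset.sum_sub_distrib]
  ring

namespace MomentBounds

variable {a x y z e η : ℝ}

theorem abs_nbrsDrift_sub_integral_discNbrs_le (hb : MomentBounds w p C) (ha : 0 < a)
    (hs : SpreadWeights w m η) (hη0 : 0 ≤ η) (hη : η ≤ 1 / 2)
    (he : 12 * C ^ 2 / (∑ j, w j) + p * (C * (∑ j, w j) / a + 2 * C * η * m) ≤ e) {i : ℕ}
    (hi : i ≤ m) (hin : i < n) {v : Fin n → Fin n} (hz : |compensatedSq w a v i| ≤ z) :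
    |nbrsDrift w p v i - ∫ ω, (discNbrs (graphOf ω.1) ω.2 i : ℝ) ∂expMeasure' n w p| ≤
      p * z + 2 * e := by
  have drift := abs_le.1 ((hb.abs_nbrsDrift_sub_le ha hs hη0 hη hi v).trans he)
  have mean := abs_le.1 ((hb.abs_integral_discNbrs_sub_le ha hs hη0 hη hi hin).trans he)
  have fluctuation : |p * compensatedSq w a v i| ≤ p * z := by
    rw [abs_mul, abs_of_pos hb.param_pos]
    exact mul_le_mul_of_nonneg_left hz hb.param_pos.le
  rw [abs_le] at fluctuation ⊢
  constructor <;> linarith [drift.1, drift.2, mean.1, mean.2, fluctuation.1, fluctuation.2]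

theorem abs_sum_discNbrs_sub_integral_le (hb : MomentBounds w p C) (ha : 0 < a)
    (hs : SpreadWeights w m η) (hη0 : 0 ≤ η) (hη : η ≤ 1 / 2) (hlm : l < m) (hmn : m ≤ n)
    (he : 12 * C ^ 2 / (∑ j, w j) + p * (C * (∑ j, w j) / a + 2 * C * η * m) ≤ e)
    {ω : (Fin n → Fin n → Bool) × (Fin n → Fin n)}
    (hx : ∀ k ∈ Finset.Icc l m,
      |∑ i ∈ Finset.Ico l k, ((discNbrs (graphOf ω.1) ω.2 i : ℝ) - nbrsDrift w p ω.2 i)| ≤ x)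
    (hz : ∀ k ≤ m, |compensatedSq w a ω.2 k| ≤ z) {u v : ℕ} (hlu : l ≤ u) (huv : u ≤ v)
    (hvm : v ≤ m) :
    |∑ i ∈ Finset.Ico u v, ((discNbrs (graphOf ω.1) ω.2 i : ℝ) -
        ∫ ω', (discNbrs (graphOf ω'.1) ω'.2 i : ℝ) ∂expMeasure' n w p)| ≤
      2 * x + (m - l) * (p * z + 2 * e) := by
  have step (i : ℕ) (him : i < m) := hb.abs_nbrsDrift_sub_integral_discNbrs_le ha hs hη0 hη he
    him.le (him.trans_le hmn) (hz i him.le)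
  set S : ℕ → ℝ := fun k =>
    ∑ i ∈ Finset.Ico l k, ((discNbrs (graphOf ω.1) ω.2 i : ℝ) - nbrsDrift w p ω.2 i)
  set drift_error : ℕ → ℝ := fun i =>
    nbrsDrift w p ω.2 i - ∫ ω', (discNbrs (graphOf ω'.1) ω'.2 i : ℝ) ∂expMeasure' n w p
  have split : ∑ i ∈ Finset.Ico u v, ((discNbrs (graphOf ω.1) ω.2 i : ℝ) -
      ∫ ω', (discNbrs (graphOf ω'.1) ω'.2 i : ℝ) ∂expMeasure' n w p) =
      S v - S u + ∑ i ∈ Finset.Ico u v, drift_error i := by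
    have increment : S v - S u = ∑ i ∈ Finset.Ico u v,
        ((discNbrs (graphOf ω.1) ω.2 i : ℝ) - nbrsDrift w p ω.2 i) :=
      sub_eq_iff_eq_add'.2 (Finset.sum_Ico_consecutive _ hlu huv).symm
    rw [increment, ← Finset.sum_add_distrib]
    exact Finset.sum_congr rfl fun i _ => (sub_add_sub_cancel _ _ _).symm
  have drift_error_le : |∑ i ∈ Finset.Ico u v, drift_error i| ≤ (m - l) * (p * z + 2 * e) := by
    refine (Finset.abs_sum_le_sum_abs _ _).trans ((Finset.sum_le_card_nsmul _ _ _ fun i hi =>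
      step i ((Finset.mem_Ico.1 hi).2.trans_le hvm)).trans ?_)
    rw [Nat.card_Ico, nsmul_eq_mul, ← Nat.cast_sub hlm.le]
    exact mul_le_mul_of_nonneg_right (Nat.cast_le.2 (tsub_le_tsub hvm hlu))
      ((abs_nonneg _).trans (step l hlm))
  have hSu := abs_le.1 (hx u (Finset.mem_Icc.2 ⟨hlu, huv.trans hvm⟩))
  have hSv := abs_le.1 (hx v (Finset.mem_Icc.2 ⟨hlu.trans huv, hvm⟩))
  rw [split]
  rw [abs_le] at drift_error_le ⊢
  constructor <;> linarith [hSu.1, hSu.2, hSv.1, hSv.2, drift_error_le.1, drift_error_le.2]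

theorem measureReal_exists_le_abs_sum_discNbrs_sub_integral_le {s t β : ℝ}
    (hb : MomentBounds w p C) (ha : 0 < a) (hs : SpreadWeights w m η) (hη0 : 0 ≤ η)
    (hη : η ≤ 1 / 2) (hlm : l < m) (hmn : m ≤ n) (hβ0 : 0 ≤ β) (hβ : ∀ j, w j ≤ β) (ht0 : 0 ≤ t)
    (ht : t ≤ 1) (htβ : 4 * t * β ≤ 1) (hs0 : 0 ≤ s) (hsβ : s * (a * β) ≤ 1)
    (he : 12 * C ^ 2 / (∑ j, w j) + p * (C * (∑ j, w j) / a + 2 * C * η * m) ≤ e)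
    (hy : 2 * x + (m - l) * (p * z + 2 * e) < y) :
    (expMeasure' n w p).real {ω | ∃ u v : ℕ, l ≤ u ∧ u ≤ v ∧ v ≤ m ∧
        y ≤ |∑ i ∈ Finset.Ico u v, ((discNbrs (graphOf ω.1) ω.2 i : ℝ) -
          ∫ ω', (discNbrs (graphOf ω'.1) ω'.2 i : ℝ) ∂expMeasure' n w p)|} ≤
      2 * Real.exp (36 * C * t ^ 2 * (m - l) - t * x) +
        2 * Real.exp (2 * C * (a * β) * s ^ 2 * m - s * z) := by
  have := isProbabilityMeasure_expMeasure' hb.weight_pos hb.param_pos.le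
  refine (measureReal_mono fun ω hω => ?_).trans ((measureReal_union_le _ _).trans (add_le_add
    (hb.measureReal_exists_le_abs_sum_discNbrs_sub_le (l := l) hs hη hmn hβ ht0 ht htβ x)
    (hb.measureReal_exists_le_abs_compensatedSq_le hs hη hmn ha.le hβ0 hβ hs0 hsβ z)))
  obtain ⟨u, v, hlu, huv, hvm, hdev⟩ := hω
  by_contra hsmall
  simp only [Set.mem_union, Set.mem_ofPred_eq, not_or, not_exists, not_and, not_le] at hsmall
  exact (hdev.trans (hb.abs_sum_discNbrs_sub_integral_le ha hs hη0 hη hlm hmn he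
    (fun k hk => (hsmall.1 k hk).le) (fun k hk => (hsmall.2 k hk).le) hlu huv hvm)).not_gt hy

end MomentBounds

end Increments

section ParameterChoice

variable {n l m : ℕ} {w : Fin n → ℝ} {p C C0 K M t y L : ℝ}

theorem chernoff_exponent_le {D : ℝ} (hC : 0 < C) (hD : 0 < D) (hKD : K ≤ D) :
    36 * C * (y / (576 * C * D)) ^ 2 * K - y / (576 * C * D) * (y / 8) ≤
      -y ^ 2 / (9216 * C * D) := by
  calc 36 * C * (y / (576 * C * D)) ^ 2 * K - y / (576 * C * D) * (y / 8)
      ≤ 36 * C * (y / (576 * C * D)) ^ 2 * D - y / (576 * C * D) * (y / 8) := by gcongr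
    _ = -y ^ 2 / (9216 * C * D) := by
        field_simp
        ring

theorem chernoff_exponent_compensatedSq_le (hC : 0 < C) (hC0 : 0 < C0) (hp : 0 < p) (hL : 0 < L)
    (hK : 0 < K) (ht : 0 < t) (hy : 0 < y) (hM : 0 < M) (hKM : K ≤ M) (hpL : p * L ≤ 2)
    (hKL : K * M ≤ C0 * (y * L)) :
    2 * C * (64 * C * C0 * L / M * (t / (131072 * C ^ 2 * C0 ^ 2))) * (16 * K * p / t) ^ 2 * M -
        16 * K * p / t * (y / (4 * K * p)) ≤ -(3 * (y / t)) := by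
  have quadratic_le : p * L * (p * (K * K)) ≤ 4 * (C0 * y) := by
    have sq_le : K * K ≤ C0 * (y * L) := (mul_le_mul_of_nonneg_left hKM hK.le).trans hKL
    calc p * L * (p * (K * K)) ≤ p * L * (p * (C0 * (y * L))) :=
          mul_le_mul_of_nonneg_left (mul_le_mul_of_nonneg_left sq_le hp.le) (mul_pos hp hL).le
      _ = (p * L) ^ 2 * (C0 * y) := by ring
      _ ≤ 2 ^ 2 * (C0 * y) := by gcongr
      _ = 4 * (C0 * y) := by norm_num
  calc _ = p * L * (p * (K * K)) / (4 * C0 * t) - 4 * (y / t) := by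
        field_simp
        ring
    _ ≤ 4 * (C0 * y) / (4 * C0 * t) - 4 * (y / t) := by gcongr
    _ = -(3 * (y / t)) := by
        field_simp
        norm_num

theorem window_deviation_lt (hC : 0 < C) (hC0 : 0 < C0) (hp : 0 < p) (hL : 0 < L) (hK : 0 < K)
    (hy : 0 < y) (hM : 0 < M) (hpL : p * L ≤ 2) (hyL : 384 * C ^ 2 * K ≤ y * L)
    (hKL : K * M ≤ C0 * (y * L)) :
    2 * (y / 8) + K * (p * (y / (4 * K * p)) + 2 * (12 * C ^ 2 / L +
      p * (C * L / (64 * C * C0 * L / M) + 2 * C * (1 / (128 * C * C0)) * M))) < y := by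
  have order_error : K * (12 * C ^ 2 / L) ≤ y / 32 := by
    rw [mul_div_assoc', div_le_div_iff₀ hL (by norm_num)]
    linarith
  have window_error : p * (K * M) / (32 * C0) ≤ y / 16 := by
    rw [div_le_div_iff₀ (by positivity) (by norm_num)]
    nlinarith [mul_le_mul_of_nonneg_left hKL hp.le,
      mul_le_mul_of_nonneg_right hpL (mul_pos hC0 hy).le]
  calc _ = y / 2 + 2 * (K * (12 * C ^ 2 / L) + p * (K * M) / (32 * C0)) := by
        field_simp [hM.ne']
        ring
    _ < y := by linarith

theorem exp_moment_order_mul_le_one (hC : 1 ≤ C) (hC0 : 1 ≤ C0) (hy : 0 < y) (ht : 0 < t)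
    (hK : 0 ≤ K) :
    4 * (y / (576 * C * (y * t + K))) * (t / (131072 * C ^ 2 * C0 ^ 2)) ≤ 1 := by
  calc _ = (y * t / (y * t + K)) * (1 / (18874368 * C ^ 3 * C0 ^ 2)) := by
        field_simp
        norm_num
    _ ≤ 1 * 1 := by
        gcongr
        · exact div_le_one_of_le₀ (le_add_of_nonneg_right hK) (by positivity)
        · refine div_le_one_of_le₀ ?_ (by positivity)
          nlinarith [one_le_mul_of_one_le_of_one_le (one_le_pow₀ hC : 1 ≤ C ^ 3)
            (one_le_pow₀ hC0 : 1 ≤ C0 ^ 2)]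
    _ = 1 := one_mul 1

theorem exp_moment_order_compensatedSq_mul_le_one (hC : 1 ≤ C) (hC0 : 1 ≤ C0) (ht : 0 < t)
    (hL : 0 < L) (hp : 0 < p) (hM : 0 < M) (hKM : K ≤ M) (hpL : p * L ≤ 2) :
    16 * K * p / t * (64 * C * C0 * L / M * (t / (131072 * C ^ 2 * C0 ^ 2))) ≤ 1 := by
  calc _ = p * L * K / (128 * C * C0 * M) := by
        field_simp
        ring
    _ ≤ 1 := by
        refine div_le_one_of_le₀ ?_ (by positivity)
        calc p * L * K ≤ p * L * M := by gcongr
          _ ≤ 2 * M := by gcongr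
          _ ≤ 128 * (C * C0) * M := by
              gcongr
              linarith [one_le_mul_of_one_le_of_one_le hC hC0]
          _ = _ := by ring

theorem MomentBounds.measureReal_exists_le_abs_sum_discNbrs_sub_integral_le_add
    (hb : MomentBounds w p C) (hC0 : 1 ≤ C0) (ht : 1 ≤ t) (hy : 0 < y) (hlm : l < m) (hmn : m ≤ n)
    (hs : SpreadWeights w m (1 / (128 * C * C0))) (hβ : ∀ j, w j ≤ t / (131072 * C ^ 2 * C0 ^ 2))
    (hyL : 384 * C ^ 2 * ((m : ℝ) - l) ≤ y * ∑ j, w j)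
    (hKL : ((m : ℝ) - l) * m ≤ C0 * (y * ∑ j, w j)) :
    (expMeasure' n w p).real {ω | ∃ u v : ℕ, l ≤ u ∧ u ≤ v ∧ v ≤ m ∧
        y ≤ |∑ i ∈ Finset.Ico u v, ((discNbrs (graphOf ω.1) ω.2 i : ℝ) -
          ∫ ω', (discNbrs (graphOf ω'.1) ω'.2 i : ℝ) ∂expMeasure' n w p)|} ≤
      2 * Real.exp (-y ^ 2 / (9216 * C * (y * t + (m - l)))) + 2 * Real.exp (-(3 * (y / t))) := by
  have hC := hb.const_pos
  have hp := hb.param_pos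
  have hL := hb.sum_pos
  have hM : (0 : ℝ) < m := Nat.cast_pos.2 (Nat.zero_lt_of_lt hlm)
  have hK : (0 : ℝ) < m - l := sub_pos.2 (Nat.cast_lt.2 hlm)
  have hKM : (m : ℝ) - l ≤ m := sub_le_self _ (Nat.cast_nonneg l)
  have hy_le : y ≤ y * t := le_mul_of_one_le_right hy.le ht
  have η_le : 1 / (128 * C * C0) ≤ 1 / 2 := by
    gcongr
    nlinarith [one_le_mul_of_one_le_of_one_le hb.one_le hC0]
  have order_le_one : y / (576 * C * (y * t + (m - l))) ≤ 1 := by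
    refine div_le_one_of_le₀ ?_ (by positivity)
    nlinarith [hb.one_le, mul_pos hy (zero_lt_one.trans_le ht)]
  have bound := hb.measureReal_exists_le_abs_sum_discNbrs_sub_integral_le (l := l)
    (a := 64 * C * C0 * (∑ j, w j) / m) (s := 16 * (m - l) * p / t) (by positivity) hs
    (by positivity) η_le hlm hmn (by positivity) hβ (by positivity) order_le_one
    (exp_moment_order_mul_le_one hb.one_le hC0 hy (by positivity) hK.le) (by positivity)
    (exp_moment_order_compensatedSq_mul_le_one hb.one_le hC0 (by positivity) hL hp hM hKM
      hb.param_mul_sum_le) le_rfl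
    (window_deviation_lt hC (by positivity) hp hL hK hy hM hb.param_mul_sum_le hyL hKL)
  refine bound.trans ?_
  gcongr
  · exact chernoff_exponent_le hC (by positivity) (le_add_of_nonneg_left (by positivity))
  · exact chernoff_exponent_compensatedSq_le hC (by positivity) hp hL hK (by positivity) hy hM hKM
      hb.param_mul_sum_le hKL

/-- With `K = m - l` and `D = y * t + K`, the two martingales are controlled by exponential moments
of orders of magnitude `y / D` and `K * p / t`. -/
theorem MomentBounds.measureReal_exists_le_abs_L0_sub_le (hb : MomentBounds w p C) (hC0 : 1 ≤ C0)
    (ht : 1 ≤ t) (hy : 0 < y) (hlm : l < m) (hmn : m ≤ n)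
    (hs : SpreadWeights w m (1 / (128 * C * C0))) (hβ : ∀ j, w j ≤ t / (131072 * C ^ 2 * C0 ^ 2))
    (hyL : 384 * C ^ 2 * ((m : ℝ) - l) ≤ y * ∑ j, w j)
    (hKL : ((m : ℝ) - l) * m ≤ C0 * (y * ∑ j, w j)) :
    (expMeasure' n w p).real {ω | ∃ u v : ℕ, l ≤ u ∧ u ≤ v ∧ v ≤ m ∧
        y ≤ |(L0 (graphOf ω.1) ω.2 v : ℝ) - L0 (graphOf ω.1) ω.2 u -
          ∫ ω', ((L0 (graphOf ω'.1) ω'.2 v : ℝ) - L0 (graphOf ω'.1) ω'.2 u)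
            ∂expMeasure' n w p|} ≤
      9216 * C * Real.exp (-y ^ 2 / (9216 * C * (y * t + (m - l)))) := by
  have hK : (0 : ℝ) < m - l := sub_pos.2 (Nat.cast_lt.2 hlm)
  have hC := hb.one_le
  have := isProbabilityMeasure_expMeasure' hb.weight_pos hb.param_pos.le
  set D := y * t + ((m : ℝ) - l)
  have hD : 0 < D := by positivity
  have exponent_le : -(3 * (y / t)) ≤ -y ^ 2 / (9216 * C * D) := by
    rw [neg_div, neg_le_neg_iff, div_le_iff₀ (mul_pos (by positivity) hD)]
    calc y ^ 2 = y / t * (y * t) := by field_simp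
      _ ≤ y / t * D := by
          gcongr
          exact le_add_of_nonneg_right hK.le
      _ ≤ 27648 * C * (y / t * D) :=
          le_mul_of_one_le_left (by positivity) (by linarith)
      _ = 3 * (y / t) * (9216 * C * D) := by ring
  calc _ ≤ (expMeasure' n w p).real {ω | ∃ u v : ℕ, l ≤ u ∧ u ≤ v ∧ v ≤ m ∧
        y ≤ |∑ i ∈ Finset.Ico u v, ((discNbrs (graphOf ω.1) ω.2 i : ℝ) -
          ∫ ω', (discNbrs (graphOf ω'.1) ω'.2 i : ℝ) ∂expMeasure' n w p)|} :=
        measureReal_mono <| by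
          rintro ω ⟨u, v, hlu, huv, hvm, hdev⟩
          rw [L0_sub_L0_sub_integral hb.weight_pos hb.param_pos.le ω huv] at hdev
          exact ⟨u, v, hlu, huv, hvm, hdev⟩
    _ ≤ 2 * Real.exp (-y ^ 2 / (9216 * C * D)) + 2 * Real.exp (-(3 * (y / t))) :=
        hb.measureReal_exists_le_abs_sum_discNbrs_sub_integral_le_add hC0 ht hy hlm hmn hs hβ hyL
          hKL
    _ ≤ 2 * Real.exp (-y ^ 2 / (9216 * C * D)) + 2 * Real.exp (-y ^ 2 / (9216 * C * D)) := by
        gcongr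
    _ = 4 * Real.exp (-y ^ 2 / (9216 * C * D)) := by ring
    _ ≤ 9216 * C * Real.exp (-y ^ 2 / (9216 * C * D)) := by
        gcongr
        linarith

end ParameterChoice

noncomputable section RegularWeights

variable {n : ℕ} {w : ∀ n : ℕ, Fin n → ℝ}

/-- Triangular arrays of positive weights whose total grows at least linearly and whose cubes are
uniformly integrable under the uniform law on the vertices. -/
structure RegularWeights (w : ∀ n : ℕ, Fin n → ℝ) : Prop where
  pos : ∀ n i, 0 < w n i
  isBigO_ell : (fun n : ℕ => (n : ℝ)) =O[atTop] ell w
  exists_sum_large_cube_le : ∀ ε > (0 : ℝ), ∃ R : ℝ, ∀ᶠ n : ℕ in atTop,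
    ∑ i with R < w n i, w n i ^ 3 ≤ ε * n

theorem sum_cube_le_card_mul_add_sum_large {ι : Type*} [Fintype ι] {x : ι → ℝ} (hx : ∀ i, 0 < x i)
    (R : ℝ) (S : Finset ι) :
    ∑ i ∈ S, x i ^ 3 ≤ S.card * |R| ^ 3 + ∑ i with R < x i, x i ^ 3 := by
  have cube_nonneg (i : ι) : 0 ≤ x i ^ 3 := pow_nonneg (hx i).le 3
  rw [← nsmul_eq_mul, ← Finset.sum_const, Finset.sum_filter]
  refine (Finset.sum_le_sum fun i _ => ?_).trans (Finset.sum_add_distrib.trans_le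
    (add_le_add_right (Finset.sum_le_univ_sum_of_nonneg fun i => ?_) _))
  · split_ifs with h
    · exact le_add_of_nonneg_left (by positivity)
    · rw [add_zero]
      exact pow_le_pow_left₀ (hx i).le ((not_lt.1 h).trans (le_abs_self R)) 3
  · split_ifs
    exacts [cube_nonneg i, le_rfl]

namespace RegularWeights

theorem exists_mul_le_ell (hw : RegularWeights w) :
    ∃ c > (0 : ℝ), ∀ᶠ n : ℕ in atTop, c * n ≤ ell w n := by
  obtain ⟨B, hB, hbound⟩ := hw.isBigO_ell.exists_pos
  refine ⟨B⁻¹, inv_pos.2 hB, hbound.bound.mono fun n hn => ?_⟩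
  have ell_nonneg : 0 ≤ ell w n := Finset.sum_nonneg fun i _ => (hw.pos n i).le
  rw [Real.norm_natCast, Real.norm_of_nonneg ell_nonneg] at hn
  rwa [inv_mul_le_iff₀ hB]

theorem exists_sum_cube_le (hw : RegularWeights w) :
    ∃ B ≥ (0 : ℝ), ∀ᶠ n : ℕ in atTop, ∑ i, w n i ^ 3 ≤ B * n := by
  obtain ⟨R, hR⟩ := hw.exists_sum_large_cube_le 1 one_pos
  refine ⟨|R| ^ 3 + 1, by positivity, hR.mono fun n hn => ?_⟩
  have split := sum_cube_le_card_mul_add_sum_large (hw.pos n) R Finset.univ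
  rw [Finset.card_univ, Fintype.card_fin] at split
  linarith

theorem eventually_sum_cube_le (hw : RegularWeights w) {m : ℕ → ℕ}
    (hm : (fun n => (m n : ℝ)) =o[atTop] fun n : ℕ => (n : ℝ)) {ε : ℝ} (hε : 0 < ε) :
    ∀ᶠ n : ℕ in atTop, ∀ S : Finset (Fin n), S.card ≤ m n → ∑ i ∈ S, w n i ^ 3 ≤ ε * n := by
  obtain ⟨R, hR⟩ := hw.exists_sum_large_cube_le (ε / 2) (half_pos hε)
  filter_upwards [hR, hm.bound (by positivity : 0 < ε / (2 * (|R| ^ 3 + 1)))] with n hn hmn S hS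
  rw [Real.norm_natCast, Real.norm_natCast, div_mul_eq_mul_div, le_div_iff₀ (by positivity)] at hmn
  have split := sum_cube_le_card_mul_add_sum_large (hw.pos n) R S
  have card_mul_le : (S.card : ℝ) * |R| ^ 3 ≤ m n * (|R| ^ 3 + 1) := by
    gcongr
    exact le_add_of_nonneg_right zero_le_one
  linarith

theorem eventually_le_mul_rpow (hw : RegularWeights w) {δ : ℝ} (hδ : 0 < δ) :
    ∀ᶠ n : ℕ in atTop, ∀ j, w n j ≤ δ * (n : ℝ) ^ ((1 : ℝ) / 3) := by
  have one_isLittleO : (fun _ : ℕ => ((1 : ℕ) : ℝ)) =o[atTop] fun n : ℕ => (n : ℝ) := by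
    rw [isLittleO_const_left]
    exact Or.inr (tendsto_norm_atTop_atTop.comp tendsto_natCast_atTop_atTop)
  filter_upwards [hw.eventually_sum_cube_le one_isLittleO (pow_pos hδ 3)] with n hn j
  have cube_le := hn {j} (Finset.card_singleton j).le
  rw [Finset.sum_singleton] at cube_le
  refine le_of_pow_le_pow_left₀ three_ne_zero (by positivity) (cube_le.trans_eq ?_)
  rw [mul_pow, ← Real.rpow_mul_natCast n.cast_nonneg]
  norm_num

theorem eventually_spreadWeights (hw : RegularWeights w) {m : ℕ → ℕ}
    (hm : (fun n => (m n : ℝ)) =o[atTop] fun n : ℕ => (n : ℝ)) {η : ℝ} (hη : 0 < η) :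
    ∀ᶠ n in atTop, SpreadWeights (w n) (m n) η := by
  obtain ⟨c, hc, hell⟩ := hw.exists_mul_le_ell
  have hε : 0 < η * c / 2 := by positivity
  filter_upwards [hell, hw.eventually_sum_cube_le hm hε, hm.bound hε] with n hn hcube hmn S hS
  rw [Real.norm_natCast, Real.norm_natCast] at hmn
  have total_ge : η * c * n ≤ η * ell w n := by
    rw [mul_assoc]
    exact mul_le_mul_of_nonneg_left hn hη.le
  have cube_le := hcube S hS
  have sum_le : ∑ j ∈ S, w n j ≤ S.card + ∑ j ∈ S, w n j ^ 3 := by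
    rw [← nsmul_one S.card, ← Finset.sum_const, ← Finset.sum_add_distrib]
    refine Finset.sum_le_sum fun j _ => ?_
    nlinarith [sq_nonneg (w n j - 1), mul_nonneg (hw.pos n j).le (sq_nonneg (w n j - 1))]
  have card_le : (S.card : ℝ) ≤ m n := Nat.cast_le.2 hS
  have slack_nonneg : 0 ≤ η * c / 2 * (n : ℝ) := by positivity
  exact ⟨by change _ ≤ η * ell w n; linarith [slack_nonneg],
    by change _ ≤ η * ell w n; linarith [slack_nonneg]⟩

theorem exists_momentBounds (hw : RegularWeights w) : ∃ C, 1 ≤ C ∧ ∀ᶠ n in atTop, ∀ p : ℝ,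
    0 < p → p * ell w n ≤ 2 → MomentBounds (w n) p C := by
  obtain ⟨c, hc, hell⟩ := hw.exists_mul_le_ell
  obtain ⟨B, hB, hcube⟩ := hw.exists_sum_cube_le
  refine ⟨1 + B / c, le_add_of_nonneg_right (by positivity), ?_⟩
  filter_upwards [eventually_gt_atTop 0, hell, hcube] with n hn hell hcube p hp hpL
  have hL : 0 < ell w n := (by positivity : 0 < c * n).trans_le hell
  have cube_le : ∑ i, w n i ^ 3 ≤ B / c * ell w n :=
    calc ∑ i, w n i ^ 3 ≤ B * n := hcube
      _ = B / c * (c * n) := by field_simp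
      _ ≤ B / c * ell w n := by gcongr
  have sq_le : ∑ i, w n i ^ 2 ≤ ell w n + ∑ i, w n i ^ 3 := by
    rw [ell, ← Finset.sum_add_distrib]
    refine Finset.sum_le_sum fun i _ => ?_
    nlinarith [mul_nonneg (hw.pos n i).le (sq_nonneg (w n i - 1))]
  exact {
    weight_pos := hw.pos n
    sum_pos := hL
    param_pos := hp
    param_mul_sum_le := hpL
    one_le := le_add_of_nonneg_right (by positivity)
    sum_sq_le := by change _ ≤ _ * ell w n; linarith
    sum_cube_le := by change _ ≤ _ * ell w n; linarith }

end RegularWeights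

theorem one_le_mul_exp_neg_sq_div {A y t K : ℝ} (hA : 3 ≤ A) (hy : 0 < y) (hyA : y ≤ A)
    (ht : 1 ≤ t) (hK : 0 ≤ K) : 1 ≤ A * Real.exp (-y ^ 2 / (A * (y * t + K))) := by
  have ratio_le : y ^ 2 / (A * (y * t + K)) ≤ 1 := by
    refine div_le_one_of_le₀ ?_ (by positivity)
    rw [sq]
    exact mul_le_mul hyA (by nlinarith) hy.le (by linarith)
  have three_inv_le : (3 : ℝ)⁻¹ ≤ Real.exp (-1) := by
    rw [Real.exp_neg]
    exact inv_anti₀ (Real.exp_pos 1) (Real.exp_one_lt_three).le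
  calc (1 : ℝ) = 3 * 3⁻¹ := by norm_num
    _ ≤ A * Real.exp (-1) := by gcongr
    _ ≤ A * Real.exp (-y ^ 2 / (A * (y * t + K))) := by
        rw [neg_div]
        gcongr

/-- For `y` below a constant multiple of `C ^ 2 / c` the bound exceeds `1`. -/
theorem MomentBounds.measureReal_exists_le_abs_L0_sub_le_of_mul_le {l m : ℕ} {w : Fin n → ℝ}
    {p c C C0 t y : ℝ} (hb : MomentBounds w p C) (hc : 0 < c) (hcL : c * n ≤ ∑ j, w j)
    (hC0 : 1 ≤ C0) (ht : 1 ≤ t) (hy : 0 < y) (hlm : l < m) (hmn : m ≤ n)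
    (hs : SpreadWeights w m (1 / (128 * C * C0))) (hβ : ∀ j, w j ≤ t / (131072 * C ^ 2 * C0 ^ 2))
    (hKL : ((m : ℝ) - l) * m ≤ C0 * (y * ∑ j, w j)) :
    (expMeasure' n w p).real {ω | ∃ u v : ℕ, l ≤ u ∧ u ≤ v ∧ v ≤ m ∧
        y ≤ |(L0 (graphOf ω.1) ω.2 v : ℝ) - L0 (graphOf ω.1) ω.2 u -
          ∫ ω', ((L0 (graphOf ω'.1) ω'.2 v : ℝ) - L0 (graphOf ω'.1) ω'.2 u)
            ∂expMeasure' n w p|} ≤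
      (9216 * C + 384 * C ^ 2 / c) * Real.exp
        (-y ^ 2 / ((9216 * C + 384 * C ^ 2 / c) * (y * t + (m - l)))) := by
  have := isProbabilityMeasure_expMeasure' hb.weight_pos hb.param_pos.le
  have hC := hb.one_le
  have hK : (0 : ℝ) < m - l := sub_pos.2 (Nat.cast_lt.2 hlm)
  have hB : 0 < 384 * C ^ 2 / c := by positivity
  rcases le_total y (384 * C ^ 2 / c) with hy_small | hy_large
  · exact measureReal_le_one.trans
      (one_le_mul_exp_neg_sq_div (by linarith) hy (by linarith) ht hK.le)
  have hyL : 384 * C ^ 2 * ((m : ℝ) - l) ≤ y * ∑ j, w j := by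
    have hKn : (m : ℝ) - l ≤ n := (sub_le_self _ (Nat.cast_nonneg l)).trans (Nat.cast_le.2 hmn)
    calc 384 * C ^ 2 * ((m : ℝ) - l) ≤ 384 * C ^ 2 * n := by gcongr
      _ = 384 * C ^ 2 / c * (c * n) := by field_simp
      _ ≤ y * ∑ j, w j := by gcongr
  refine (hb.measureReal_exists_le_abs_L0_sub_le hC0 ht hy hlm hmn hs hβ hyL hKL).trans ?_
  have hA : 9216 * C ≤ 9216 * C + 384 * C ^ 2 / c := le_add_of_nonneg_right hB.le
  simp only [neg_div]
  gcongr

end RegularWeights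

noncomputable section CriticalWeights

theorem tendsto_div_of_sub_isLittleO {X g : ℕ → ℝ} {a : ℝ}
    (hX : (fun n : ℕ => X n - a * n) =o[atTop] g) (hg : g =O[atTop] fun n : ℕ => (n : ℝ)) :
    Tendsto (fun n : ℕ => X n / n) atTop (𝓝 a) := by
  have error := (hX.trans_isBigO hg).tendsto_div_nhds_zero.add_const a
  rw [zero_add] at error
  refine error.congr' ?_
  filter_upwards [eventually_ne_atTop 0] with n hn
  field_simp
  ring

theorem rpow_isBigO_natCast {r : ℝ} (hr : r ≤ 1) :
    (fun n : ℕ => (n : ℝ) ^ r) =O[atTop] fun n : ℕ => (n : ℝ) := by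
  refine .of_bound' ?_
  filter_upwards [eventually_ge_atTop 1] with n hn
  rw [Real.norm_of_nonneg (by positivity), Real.norm_natCast]
  exact (Real.rpow_le_rpow_of_exponent_le (Nat.one_le_cast.2 hn) hr).trans_eq (Real.rpow_one _)

/-- The cube of `x`, truncated to a bounded continuous function. -/
def truncatedCube (R : ℕ) : BoundedContinuousFunction ℝ ℝ :=
  .ofNormedAddCommGroup (fun x => (max 0 (min x R)) ^ 3) (by fun_prop) ((R : ℝ) ^ 3) fun x => by
    rw [Real.norm_of_nonneg (by positivity)]
    exact pow_le_pow_left₀ (le_max_left _ _) (max_le R.cast_nonneg (min_le_right _ _)) 3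

theorem truncatedCube_apply (R : ℕ) (x : ℝ) : truncatedCube R x = (max 0 (min x R)) ^ 3 := rfl

theorem truncatedCube_nonneg (R : ℕ) (x : ℝ) : 0 ≤ truncatedCube R x := by
  rw [truncatedCube_apply]
  positivity

theorem truncatedCube_le_cube (R : ℕ) {x : ℝ} (hx : 0 ≤ x) : truncatedCube R x ≤ x ^ 3 :=
  pow_le_pow_left₀ (le_max_left _ _) (max_le hx (min_le_left _ _)) 3

theorem truncatedCube_eq_cube {R : ℕ} {x : ℝ} (hx : 0 ≤ x) (hxR : x ≤ R) :
    truncatedCube R x = x ^ 3 := by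
  rw [truncatedCube_apply, min_eq_left hxR, max_eq_right hx]

theorem cube_le_two_mul_sub_truncatedCube {R : ℕ} {x : ℝ} (hx : 2 * R < x) :
    x ^ 3 ≤ 2 * (x ^ 3 - truncatedCube R x) := by
  have hR : (0 : ℝ) ≤ R := R.cast_nonneg
  have cube_le : (2 * R : ℝ) ^ 3 ≤ x ^ 3 := pow_le_pow_left₀ (by positivity) hx.le 3
  rw [truncatedCube_apply, min_eq_right (by linarith), max_eq_right hR]
  nlinarith [pow_nonneg hR 3]

theorem tendsto_integral_truncatedCube {μ : Measure ℝ} (hpos : ∀ᵐ x ∂μ, 0 < x)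
    (hint : Integrable (fun x => x ^ 3) μ) :
    Tendsto (fun R : ℕ => ∫ x, truncatedCube R x ∂μ) atTop (𝓝 (∫ x, x ^ 3 ∂μ)) := by
  refine tendsto_integral_of_dominated_convergence (fun x => x ^ 3)
    (fun R => (truncatedCube R).continuous.aestronglyMeasurable) hint (fun R => ?_) ?_
  · filter_upwards [hpos] with x hx
    rw [Real.norm_of_nonneg (truncatedCube_nonneg R x)]
    exact truncatedCube_le_cube R hx.le
  · filter_upwards [hpos] with x hx
    refine tendsto_const_nhds.congr' ?_
    filter_upwards [eventually_ge_atTop ⌈x⌉₊] with R hR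
    exact (truncatedCube_eq_cube hx.le (Nat.ceil_le.1 hR)).symm

variable {w : ∀ n : ℕ, Fin n → ℝ} {μ : Measure ℝ} {f : ℕ → ℝ}

namespace CondC

theorem integral_pos (hC : CondC w μ) : 0 < ∫ x, x ∂μ := by
  have := hC.isProb
  have memLp_three : MemLp (fun x : ℝ => x) 3 μ := by
    refine (integrable_norm_rpow_iff aestronglyMeasurable_id three_ne_zero (by norm_num)).1 ?_
    simpa only [id_eq, norm_pow, ENNReal.toReal_ofNat, Real.rpow_ofNat] using hC.int3.norm
  have nonneg : 0 ≤ᵐ[μ] fun x : ℝ => x := hC.pos.mono fun x hx => hx.le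
  refine (integral_nonneg_of_ae nonneg).lt_of_ne' fun integral_eq_zero => ?_
  obtain ⟨x, hx, hx0⟩ := (hC.pos.and ((integral_eq_zero_iff_of_nonneg_ae nonneg
    (memLp_three.integrable (by norm_num))).1 integral_eq_zero)).exists
  exact hx.ne' hx0

theorem exists_sum_large_cube_le (hC : CondC w μ) {ε : ℝ} (hε : 0 < ε) :
    ∃ R : ℝ, ∀ᶠ n : ℕ in atTop, ∑ i with R < w n i, w n i ^ 3 ≤ ε * n := by
  obtain ⟨R, hR⟩ := ((tendsto_integral_truncatedCube hC.pos hC.int3).eventually_const_lt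
    (sub_lt_self _ (half_pos hε))).exists
  have tail := (tendsto_div_of_sub_isLittleO hC.cube_asymp
    (by simpa using rpow_isBigO_natCast zero_le_one)).sub (hC.weak (truncatedCube R))
  refine ⟨2 * R, ?_⟩
  filter_upwards [eventually_gt_atTop 0, tail.eventually_lt_const (sub_lt_comm.1 hR)] with
    n hn htail
  rw [← sub_div, div_lt_iff₀ (Nat.cast_pos.2 hn), ← Finset.sum_sub_distrib] at htail
  calc ∑ i with 2 * R < w n i, w n i ^ 3
      ≤ ∑ i with 2 * R < w n i, 2 * (w n i ^ 3 - truncatedCube R (w n i)) :=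
        Finset.sum_le_sum fun i hi =>
          cube_le_two_mul_sub_truncatedCube (Finset.mem_filter.1 hi).2
    _ ≤ ∑ i, 2 * (w n i ^ 3 - truncatedCube R (w n i)) :=
        Finset.sum_le_univ_sum_of_nonneg fun i =>
          mul_nonneg zero_le_two (sub_nonneg.2 (truncatedCube_le_cube R (hC.w_pos n i).le))
    _ ≤ ε * n := by
        rw [← Finset.mul_sum]
        linarith

theorem regularWeights (hC : CondC w μ) : RegularWeights w where
  pos := hC.w_pos
  isBigO_ell := by
    have mean := tendsto_div_of_sub_isLittleO hC.ell_asymp (rpow_isBigO_natCast (by norm_num))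
    exact (isTheta_of_div_tendsto_nhds_ne_zero mean hC.integral_pos.ne').isBigO
  exists_sum_large_cube_le _ := hC.exists_sum_large_cube_le

end CondC

theorem RegularWeights.tendsto_pf_mul_ell (hw : RegularWeights w)
    (hf : f =o[atTop] fun n : ℕ => (n : ℝ) ^ ((1 : ℝ) / 3)) :
    Tendsto (fun n => pf w f n * ell w n) atTop (𝓝 1) := by
  have root_isBigO : (fun n : ℕ => (n : ℝ) ^ ((1 : ℝ) / 3)) =O[atTop]
      fun n => ell w n ^ ((1 : ℝ) / 3) :=
    hw.isBigO_ell.rpow (by norm_num) (.of_forall fun n => Finset.sum_nonneg fun i _ =>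
      (hw.pos n i).le)
  have ratio := (hf.trans_isBigO root_isBigO).tendsto_div_nhds_zero.const_add 1
  rw [add_zero] at ratio
  refine ratio.congr' ?_
  filter_upwards [eventually_gt_atTop 0] with n hn
  have hL : 0 < ell w n := Finset.sum_pos (fun i _ => hw.pos n i) ⟨⟨0, hn⟩, Finset.mem_univ _⟩
  have factor : ell w n ^ ((4 : ℝ) / 3) = ell w n ^ ((1 : ℝ) / 3) * ell w n := by
    rw [← Real.rpow_add_one hL.ne']
    norm_num
  rw [pf, factor]
  field_simp

theorem RegularWeights.eventually_pf_pos_and_mul_ell_le (hw : RegularWeights w)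
    (hf : f =o[atTop] fun n : ℕ => (n : ℝ) ^ ((1 : ℝ) / 3)) :
    ∀ᶠ n in atTop, 0 < pf w f n ∧ pf w f n * ell w n ≤ 2 := by
  have limit := hw.tendsto_pf_mul_ell hf
  filter_upwards [limit.eventually_const_lt one_pos, limit.eventually_lt_const one_lt_two] with
    n hpos hlt
  exact ⟨pos_of_mul_pos_left hpos (Finset.sum_nonneg fun i _ => (hw.pos n i).le), hlt.le⟩

theorem Cond3.isBigO_mul_ell {Abar : ℝ} {a b d : ℕ → ℝ} (h : Cond3 w Abar a b (fun _ => 0) d)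
    (hb : 0 ≤ b) : (fun n => (a n - b n) * a n) =O[atTop] fun n => d n * ell w n := by
  refine h.c2.a_sq_bigO.congr' ?_ .rfl
  filter_upwards [h.diff_top.eventually_ge_atTop 0] with n hn
  rw [add_zero, Real.sq_sqrt (mul_nonneg hn ((hb n).trans (sub_nonneg.1 hn)))]

end CriticalWeights

theorem L0_process_concentration_general
    (w : ∀ n : ℕ, Fin n → ℝ) (hw : RegularWeights w) :
    ∃ A > (0 : ℝ), ∀ (p : ℕ → ℝ) (m l : ℕ → ℕ) (y : ℕ → ℝ),
      (∀ᶠ n in atTop, 0 < p n ∧ p n * ell w n ≤ 2) →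
      ((fun n => (m n : ℝ)) =o[atTop] fun n : ℕ => (n : ℝ)) →
      (∀ᶠ n in atTop, l n < m n) → (∀ᶠ n in atTop, 0 < y n) →
      ((fun n => ((m n : ℝ) - l n) * m n) =O[atTop] fun n => y n * ell w n) →
      ∀ᶠ n : ℕ in atTop,
        expMeasure' n (w n) (p n)
          {ω : (Fin n → Fin n → Bool) × (Fin n → Fin n) |
            ∃ u v : ℕ, l n ≤ u ∧ u ≤ v ∧ v ≤ m n ∧
              y n ≤ |((L0 (graphOf ω.1) ω.2 v : ℝ) - (L0 (graphOf ω.1) ω.2 u : ℝ)) -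
                  ∫ ω', ((L0 (graphOf ω'.1) ω'.2 v : ℝ) - (L0 (graphOf ω'.1) ω'.2 u : ℝ))
                    ∂expMeasure' n (w n) (p n)|}
        ≤ ENNReal.ofReal (A * Real.exp
            (-(y n) ^ 2 / (A * (y n * (n : ℝ) ^ ((1 : ℝ) / 3) + ((m n : ℝ) - (l n : ℝ)))))) := by
  obtain ⟨c, hc, hell⟩ := hw.exists_mul_le_ell
  obtain ⟨C, hC, hmoments⟩ := hw.exists_momentBounds
  refine ⟨9216 * C + 384 * C ^ 2 / c, by positivity, fun p m l y hp hm hlm hy hKL => ?_⟩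
  obtain ⟨C0, hC0, hwindow⟩ := hKL.exists_pos
  have hmax := hw.eventually_le_mul_rpow
    (by positivity : 0 < 1 / (131072 * C ^ 2 * (C0 + 1) ^ 2))
  have hspread := hw.eventually_spreadWeights hm (by positivity : 0 < 1 / (128 * C * (C0 + 1)))
  filter_upwards [eventually_ge_atTop 1, hell, hmoments, hp, hm.bound one_pos, hlm, hy,
    hwindow.bound, hmax, hspread] with n hn hell hmoments hp hmn hlm hy hwindow hmax hspread
  have hb := hmoments _ hp.1 hp.2
  have := isProbabilityMeasure_expMeasure' hb.weight_pos hb.param_pos.le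
  rw [one_mul, Real.norm_natCast, Real.norm_natCast, Nat.cast_le] at hmn
  have window_le : ((m n : ℝ) - l n) * m n ≤ (C0 + 1) * (y n * ell w n) := by
    have hyL : 0 < y n * ell w n := mul_pos hy hb.sum_pos
    refine (Real.le_norm_self _).trans (hwindow.trans ?_)
    rw [Real.norm_of_nonneg hyL.le]
    gcongr
    exact le_add_of_nonneg_right zero_le_one
  rw [← ofReal_measureReal]
  exact ENNReal.ofReal_le_ofReal (hb.measureReal_exists_le_abs_L0_sub_le_of_mul_le hc hell
    (le_add_of_nonneg_left hC0.le)
    (Real.one_le_rpow (Nat.one_le_cast.2 hn) (by norm_num)) hy hlm hmn hspread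
    (fun j => (hmax j).trans_eq (by ring)) window_le)

/-- Theorem of the paper: concentration of the process `L⁰`. -/
theorem L0_process_concentration
    (w : ∀ n : ℕ, Fin n → ℝ) (μ : Measure ℝ) (hC : CondC w μ)
    (f : ℕ → ℝ) (hf : f =o[atTop] fun n : ℕ => (n : ℝ) ^ ((1 : ℝ) / 3)) :
    ∃ Abar > (0 : ℝ), ∃ A > (0 : ℝ), ∀ m l : ℕ → ℕ, ∀ y : ℕ → ℝ,
      Cond3 w Abar (fun n => (m n : ℝ)) (fun n => (l n : ℝ)) (fun _ => (0 : ℝ)) y →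
      ∀ᶠ n : ℕ in atTop,
        expMeasure' n (w n) (pf w f n)
          {ω : (Fin n → Fin n → Bool) × (Fin n → Fin n) |
            ∃ u v : ℕ, l n ≤ u ∧ u ≤ v ∧ v ≤ m n ∧
              y n ≤ |((L0 (graphOf ω.1) ω.2 v : ℝ) - (L0 (graphOf ω.1) ω.2 u : ℝ)) -
                  ∫ ω', ((L0 (graphOf ω'.1) ω'.2 v : ℝ) - (L0 (graphOf ω'.1) ω'.2 u : ℝ))
                    ∂expMeasure' n (w n) (pf w f n)|}
        ≤ ENNReal.ofReal (A * Real.exp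
            (-(y n) ^ 2 / (A * (y n * (n : ℝ) ^ ((1 : ℝ) / 3) + ((m n : ℝ) - (l n : ℝ)))))) := by
  obtain ⟨A, hA, bound⟩ := L0_process_concentration_general w hC.regularWeights
  refine ⟨1, one_pos, A, hA, fun m l y h => bound _ m l y
    (hC.regularWeights.eventually_pf_pos_and_mul_ell_le hf)
    (by simpa only [add_zero] using h.sum_lito)
    ((h.diff_top.eventually_gt_atTop 0).mono fun n hn => Nat.cast_lt.1 (sub_pos.1 hn))
    (h.c2.b_top.eventually_gt_atTop 0) (h.isBigO_mul_ell fun n => Nat.cast_nonneg _)⟩
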